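/- arXiv:1707.08706 — 15 statements merged into one kernel-verified Lean document; each statement's English description precedes it below -/
import Mathlib

section
/- Suppose there exists λ0 ≥ 0 such that the matrix Q1 + λ0·Q2 is positive definite. Then problem (P) is bounded from below, i.e., inf{f1(x) : x ∈ ℝⁿ, f2(x) ≤ 0} > −∞. -/
open Matrix

/-- If there exists `λ0 ≥ 0` with `Q1 + λ0 • Q2` positive definite, then the GTRS
problem (P): minimize `f1` subject to `f2 ≤ 0` is bounded from below. -/
theorem gtrs_bounded_below
    (n : ℕ) (Q1 Q2 : Matrix (Fin n) (Fin n) ℝ)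
    (hQ1 : Q1.IsSymm) (hQ2 : Q2.IsSymm)
    (b1 b2 : Fin n → ℝ) (c : ℝ)
    (f1 : (Fin n → ℝ) → ℝ) (f2 : (Fin n → ℝ) → ℝ)
    (hf1 : ∀ x, f1 x = (1 / 2) * (x ⬝ᵥ Q1.mulVec x) + b1 ⬝ᵥ x)
    (hf2 : ∀ x, f2 x = (1 / 2) * (x ⬝ᵥ Q2.mulVec x) + b2 ⬝ᵥ x + c)
    (hpd : ∃ lam0 : ℝ, 0 ≤ lam0 ∧ (Q1 + lam0 • Q2).PosDef) :
    ∃ m : ℝ, ∀ x : Fin n → ℝ, f2 x ≤ 0 → m ≤ f1 x := by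
  obtain ⟨l, hl, hA⟩ := hpd
  obtain ⟨A, hAdef⟩ : ∃ A, A = Q1 + l • Q2 := ⟨_, rfl⟩
  rw [← hAdef] at hA
  have hsymm : Aᵀ = A := by
    rw [hAdef, Matrix.transpose_add, Matrix.transpose_smul, hQ1.eq, hQ2.eq]
  have hdet : IsUnit A.det := hA.det_pos.ne'.isUnit
  obtain ⟨y, hy⟩ : ∃ y, A *ᵥ y = b1 + l • b2 :=
    ⟨A⁻¹ *ᵥ (b1 + l • b2), by
      rw [Matrix.mulVec_mulVec, Matrix.mul_nonsing_inv _ hdet, Matrix.one_mulVec]⟩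
  refine ⟨-(1 / 2) * (y ⬝ᵥ A *ᵥ y) + l * c, fun x hx => ?_⟩
  have h0 : 0 ≤ (x + y) ⬝ᵥ A *ᵥ (x + y) := by
    simpa using hA.posSemidef.dotProduct_mulVec_nonneg (x + y)
  have h1 : y ⬝ᵥ A *ᵥ x = (A *ᵥ y) ⬝ᵥ x := by
    rw [Matrix.dotProduct_mulVec, ← Matrix.mulVec_transpose, hsymm]
  have h2 : x ⬝ᵥ A *ᵥ y = (A *ᵥ y) ⬝ᵥ x := dotProduct_comm _ _
  have h3 : (A *ᵥ y) ⬝ᵥ x = b1 ⬝ᵥ x + l * (b2 ⬝ᵥ x) := by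
    rw [hy, add_dotProduct, smul_dotProduct, smul_eq_mul]
  have h4 : x ⬝ᵥ A *ᵥ x = x ⬝ᵥ Q1 *ᵥ x + l * (x ⬝ᵥ Q2 *ᵥ x) := by
    rw [hAdef, Matrix.add_mulVec, Matrix.smul_mulVec, dotProduct_add, dotProduct_smul,
      smul_eq_mul]
  rw [Matrix.mulVec_add, dotProduct_add, add_dotProduct, add_dotProduct, h1, h2, h3, h4] at h0
  have h5 : l * f2 x ≤ 0 := mul_nonpos_of_nonneg_of_nonpos hl hx
  rw [hf2] at h5
  rw [hf1]
  linarith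
end

section
/- Let λ1 < λ2 be real numbers such that Q1 + λ1·Q2 and Q1 + λ2·Q2 are both positive semidefinite, and assume the common null space of Q1 and Q2 is trivial, i.e., null(Q1) ∩ null(Q2) = {0}. Then for every λ with λ1 < λ < λ2, the matrix Q1 + λ·Q2 is positive definite. -/
open Matrix

/-- If `Q1 + λ1 • Q2` and `Q1 + λ2 • Q2` are positive semidefinite with `λ1 < λ2`,
and the common null space of `Q1` and `Q2` is trivial, then `Q1 + λ • Q2` is
positive definite for every `λ1 < λ < λ2`. -/
theorem posDef_of_strictly_between
    (n : ℕ) (Q1 Q2 : Matrix (Fin n) (Fin n) ℝ)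
    (hQ1 : Q1.IsSymm) (hQ2 : Q2.IsSymm)
    (lam1 lam2 : ℝ) (hlt : lam1 < lam2)
    (h1 : (Q1 + lam1 • Q2).PosSemidef) (h2 : (Q1 + lam2 • Q2).PosSemidef)
    (hnull : ∀ v : Fin n → ℝ, Q1.mulVec v = 0 → Q2.mulVec v = 0 → v = 0) :
    ∀ lam : ℝ, lam1 < lam → lam < lam2 → (Q1 + lam • Q2).PosDef := by
  intro lam hl1 hl2
  have hherm : (Q1 + lam • Q2).IsHermitian := by
    have h : (Q1 + lam • Q2)ᵀ = Q1 + lam • Q2 := by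
      rw [transpose_add, transpose_smul, hQ1.eq, hQ2.eq]
    rw [IsHermitian, conjTranspose_eq_transpose_of_trivial, h]
  refine PosDef.of_dotProduct_mulVec_pos hherm ?_
  intro x hx
  by_contra hneg
  have e : ∀ t : ℝ, star x ⬝ᵥ ((Q1 + t • Q2) *ᵥ x)
      = star x ⬝ᵥ (Q1 *ᵥ x) + t * (star x ⬝ᵥ (Q2 *ᵥ x)) := by
    intro t
    rw [add_mulVec, smul_mulVec, dotProduct_add, dotProduct_smul, smul_eq_mul]
  have p1 := h1.dotProduct_mulVec_nonneg x
  have p2 := h2.dotProduct_mulVec_nonneg x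
  have z1 := h1.dotProduct_mulVec_zero_iff x
  have z2 := h2.dotProduct_mulVec_zero_iff x
  rw [e] at p1 p2 z1 z2 hneg
  generalize star x ⬝ᵥ (Q1 *ᵥ x) = a at *
  generalize star x ⬝ᵥ (Q2 *ᵥ x) = b at *
  have hb1 : b ≤ 0 := by
    by_contra h
    nlinarith [mul_pos (sub_pos.2 hl1) (not_le.1 h)]
  have hb2 : 0 ≤ b := by
    by_contra h
    nlinarith [mul_pos (sub_pos.2 hl2) (neg_pos.2 (not_le.1 h))]
  have hb : b = 0 := le_antisymm hb1 hb2
  subst hb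
  have ha : a = 0 := by linarith
  subst ha
  have k1 := z1.1 (by simp)
  have k2 := z2.1 (by simp)
  rw [add_mulVec, smul_mulVec] at k1 k2
  have hq2 : Q2 *ᵥ x = 0 := by
    have h : (lam2 - lam1) • (Q2 *ᵥ x) = 0 := by
      rw [sub_smul, ← add_sub_add_left_eq_sub _ _ (Q1 *ᵥ x), k1, k2, sub_zero]
    exact (smul_eq_zero.1 h).resolve_left (sub_ne_zero.2 hlt.ne')
  rw [hq2, smul_zero, add_zero] at k1
  exact hx (hnull x k1 hq2)
end

section
/- Suppose the Slater condition holds, null(Q1) ∩ null(Q2) = {0}, and {λ ≥ 0 : Q1 + λQ2 is positive semidefinite} = [λ1, λ2] with λ1 < λ2 (Condition 1). Define hᵢ(x) = f1(x) + λᵢ·f2(x) for i = 1, 2. Then problem (P) is equivalent to the convex problem (P1): inf{f1(x) : f2(x) ≤ 0} = inf over x ∈ ℝⁿ of max{h1(x), h2(x)}. -/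
open Matrix

/-- A quadratic with positive leading coefficient and nonpositive constant term has a
nonnegative root. -/
lemma gtrs_quad_root (α β γ : ℝ) (hα : 0 < α) (hγ : γ ≤ 0) :
    ∃ t : ℝ, 0 ≤ t ∧ α * t ^ 2 + β * t + γ = 0 := by
  have hD : β ^ 2 ≤ β ^ 2 - 4 * α * γ := by nlinarith
  have hD0 : 0 ≤ β ^ 2 - 4 * α * γ := le_trans (sq_nonneg _) hD
  have hs : β ≤ Real.sqrt (β ^ 2 - 4 * α * γ) := Real.le_sqrt_of_sq_le hD
  refine ⟨(-β + Real.sqrt (β ^ 2 - 4 * α * γ)) / (2 * α), ?_, ?_⟩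
  · apply div_nonneg <;> linarith
  · have hsq := Real.sq_sqrt hD0
    set s := Real.sqrt (β ^ 2 - 4 * α * γ)
    field_simp
    nlinarith

/-- Expansion of a quadratic form along a line. -/
lemma gtrs_expand {n : ℕ} (Q : Matrix (Fin n) (Fin n) ℝ) (hQ : Q.IsSymm)
    (x v : Fin n → ℝ) (t : ℝ) :
    (x + t • v) ⬝ᵥ Q.mulVec (x + t • v) =
      x ⬝ᵥ Q.mulVec x + 2 * t * (x ⬝ᵥ Q.mulVec v) + t ^ 2 * (v ⬝ᵥ Q.mulVec v) := by
  have h : v ⬝ᵥ Q.mulVec x = x ⬝ᵥ Q.mulVec v := by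
    rw [dotProduct_comm, ← vecMul_transpose, hQ.eq, dotProduct_mulVec]
  simp only [mulVec_add, mulVec_smul, dotProduct_add, add_dotProduct, smul_dotProduct,
    dotProduct_smul, smul_eq_mul, h]
  ring

lemma gtrs_form {n : ℕ} (A B : Matrix (Fin n) (Fin n) ℝ) (l : ℝ) (x v : Fin n → ℝ) :
    x ⬝ᵥ (A + l • B).mulVec v = x ⬝ᵥ A.mulVec v + l * (x ⬝ᵥ B.mulVec v) := by
  simp [add_mulVec, smul_mulVec, dotProduct_add, dotProduct_smul]

/-- Positive definiteness is stable under small perturbations. -/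
lemma gtrs_perturb {n : ℕ} (A B : Matrix (Fin n) (Fin n) ℝ)
    (hA : ∀ v : Fin n → ℝ, v ≠ 0 → 0 < v ⬝ᵥ A.mulVec v) :
    ∃ ε : ℝ, 0 < ε ∧ ∀ t : ℝ, |t| ≤ ε → ∀ v : Fin n → ℝ,
      0 ≤ v ⬝ᵥ (A + t • B).mulVec v := by
  by_cases hS : (Metric.sphere (0 : Fin n → ℝ) 1).Nonempty
  · have hc : IsCompact (Metric.sphere (0 : Fin n → ℝ) 1) := isCompact_sphere _ _
    have contA : Continuous fun v : Fin n → ℝ => v ⬝ᵥ A.mulVec v := by fun_prop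
    have contB : Continuous fun v : Fin n → ℝ => |v ⬝ᵥ B.mulVec v| := by fun_prop
    obtain ⟨u, hu, humin⟩ := hc.exists_isMinOn hS contA.continuousOn
    obtain ⟨w, hw, hwmax⟩ := hc.exists_isMaxOn hS contB.continuousOn
    have hu0 : u ≠ 0 := by
      rintro rfl
      simp at hu
    have hm := hA u hu0
    set m := u ⬝ᵥ A.mulVec u
    set K := |w ⬝ᵥ B.mulVec w|
    have hK : 0 ≤ K := abs_nonneg _
    refine ⟨m / (K + 1), by positivity, fun t ht v => ?_⟩
    by_cases hv : v = 0
    · simp [hv]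
    have hnv : 0 < ‖v‖ := norm_pos_iff.mpr hv
    set z : Fin n → ℝ := ‖v‖⁻¹ • v
    have hz : z ∈ Metric.sphere (0 : Fin n → ℝ) 1 := by
      simp [z, norm_smul, hnv.ne']
    have hvz : v = ‖v‖ • z := by simp [z, smul_smul, hnv.ne']
    have h1 : m ≤ z ⬝ᵥ A.mulVec z := humin hz
    have h2 : |z ⬝ᵥ B.mulVec z| ≤ K := hwmax hz
    have h3 : |t * (z ⬝ᵥ B.mulVec z)| ≤ m := by
      rw [abs_mul]
      calc |t| * |z ⬝ᵥ B.mulVec z| ≤ m / (K + 1) * (K + 1) := by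
            apply mul_le_mul ht (by linarith) (abs_nonneg _) (by positivity)
        _ = m := by field_simp
    have h4 := (abs_le.mp h3).1
    rw [hvz, mulVec_smul, dotProduct_smul, smul_dotProduct, gtrs_form, smul_eq_mul, smul_eq_mul]
    have : 0 ≤ z ⬝ᵥ A.mulVec z + t * (z ⬝ᵥ B.mulVec z) := by linarith
    positivity
  · refine ⟨1, one_pos, fun t _ v => ?_⟩
    have hv : v = 0 := by
      by_contra hv
      have hnv : 0 < ‖v‖ := norm_pos_iff.mpr hv
      exact hS ⟨‖v‖⁻¹ • v, by simp [norm_smul, hnv.ne']⟩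
    simp [hv]



/-- Under Condition 1 (`I_PSD = [λ1, λ2]` with `λ1 < λ2`), the Slater condition and
triviality of the common null space, the GTRS (P) is equivalent to the convex
reformulation (P1): the minimax of the two convex quadratics `h1, h2`. -/
theorem gtrs_equiv_minimax_CQR
    (n : ℕ) (Q1 Q2 : Matrix (Fin n) (Fin n) ℝ)
    (hQ1 : Q1.IsSymm) (hQ2 : Q2.IsSymm)
    (b1 b2 : Fin n → ℝ) (c : ℝ)
    (f1 f2 : (Fin n → ℝ) → ℝ)
    (hf1 : ∀ x, f1 x = (1 / 2) * (x ⬝ᵥ Q1.mulVec x) + b1 ⬝ᵥ x)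
    (hf2 : ∀ x, f2 x = (1 / 2) * (x ⬝ᵥ Q2.mulVec x) + b2 ⬝ᵥ x + c)
    (hslater : ∃ xbar : Fin n → ℝ, f2 xbar < 0)
    (hnull : ∀ v : Fin n → ℝ, Q1.mulVec v = 0 → Q2.mulVec v = 0 → v = 0)
    (lam1 lam2 : ℝ) (hlt : lam1 < lam2)
    (hcond1 : {lam : ℝ | 0 ≤ lam ∧ (Q1 + lam • Q2).PosSemidef} = Set.Icc lam1 lam2)
    (h1 h2 : (Fin n → ℝ) → ℝ)
    (hh1 : ∀ x, h1 x = f1 x + lam1 * f2 x)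
    (hh2 : ∀ x, h2 x = f1 x + lam2 * f2 x) :
    sInf (f1 '' {x | f2 x ≤ 0}) = sInf (Set.range fun x => max (h1 x) (h2 x)) := by
  have psd : ∀ l, 0 ≤ l ∧ (Q1 + l • Q2).PosSemidef ↔ lam1 ≤ l ∧ l ≤ lam2 := fun l => by
    have : l ∈ {lam : ℝ | 0 ≤ lam ∧ (Q1 + lam • Q2).PosSemidef} ↔ l ∈ Set.Icc lam1 lam2 := by
      rw [hcond1]
    simpa using this
  have symm : ∀ l : ℝ, (Q1 + l • Q2).IsSymm := fun l => hQ1.add (hQ2.smul l)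
  have herm : ∀ l : ℝ, (Q1 + l • Q2).IsHermitian := fun l => by
    rw [Matrix.IsHermitian, conjTranspose_eq_transpose_of_trivial]; exact symm l
  have mkpsd : ∀ l : ℝ, (∀ v : Fin n → ℝ, 0 ≤ v ⬝ᵥ (Q1 + l • Q2).mulVec v) →
      (Q1 + l • Q2).PosSemidef := fun l h =>
    Matrix.PosSemidef.of_dotProduct_mulVec_nonneg (herm l) (fun v => by simpa using h v)
  obtain ⟨hl1, hP1⟩ := (psd lam1).2 ⟨le_rfl, hlt.le⟩
  obtain ⟨hl2, hP2⟩ := (psd lam2).2 ⟨hlt.le, le_rfl⟩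
  have nn1 : ∀ v : Fin n → ℝ, 0 ≤ v ⬝ᵥ (Q1 + lam1 • Q2).mulVec v := fun v => by
    simpa using hP1.dotProduct_mulVec_nonneg v
  have nn2 : ∀ v : Fin n → ℝ, 0 ≤ v ⬝ᵥ (Q1 + lam2 • Q2).mulVec v := fun v => by
    simpa using hP2.dotProduct_mulVec_nonneg v
  have z1 : ∀ v : Fin n → ℝ, v ⬝ᵥ (Q1 + lam1 • Q2).mulVec v = 0 →
      (Q1 + lam1 • Q2).mulVec v = 0 := fun v h =>
    (hP1.dotProduct_mulVec_zero_iff v).1 (by simpa using h)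
  have z2 : ∀ v : Fin n → ℝ, v ⬝ᵥ (Q1 + lam2 • Q2).mulVec v = 0 →
      (Q1 + lam2 • Q2).mulVec v = 0 := fun v h =>
    (hP2.dotProduct_mulVec_zero_iff v).1 (by simpa using h)
  -- no common null vectors of the two endpoint forms
  have both : ∀ v : Fin n → ℝ, v ⬝ᵥ (Q1 + lam1 • Q2).mulVec v = 0 →
      v ⬝ᵥ (Q1 + lam2 • Q2).mulVec v = 0 → v = 0 := by
    intro v e1 e2
    have a1 := z1 v e1
    have a2 := z2 v e2
    rw [add_mulVec, smul_mulVec] at a1 a2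
    have hQ : Q2.mulVec v = 0 := by
      have : (lam2 - lam1) • Q2.mulVec v = 0 := by
        rw [sub_smul, ← add_sub_add_left_eq_sub _ _ (Q1.mulVec v), a1, a2, sub_zero]
      rcases smul_eq_zero.1 this with h | h
      · linarith
      · exact h
    exact hnull v (by simpa [hQ] using a1) hQ
  -- null vectors at the endpoints
  have nv1 : 0 < lam1 → ∃ v : Fin n → ℝ, v ≠ 0 ∧ v ⬝ᵥ (Q1 + lam1 • Q2).mulVec v = 0 := by
    intro hpos
    by_contra hcon
    push Not at hcon
    obtain ⟨ε, hε, H⟩ := gtrs_perturb (Q1 + lam1 • Q2) Q2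
      (fun v hv => lt_of_le_of_ne (nn1 v) (hcon v hv).symm)
    have hmin : 0 < min ε lam1 := lt_min hε hpos
    have h := (psd (lam1 + -min ε lam1)).1 ⟨by linarith [min_le_right ε lam1], mkpsd _ (fun v => by
      have := H (-min ε lam1) (by rw [abs_neg, abs_of_pos hmin]; exact min_le_left _ _) v
      rwa [add_assoc, ← add_smul] at this)⟩
    linarith [h.1]
  have nv2 : ∃ v : Fin n → ℝ, v ≠ 0 ∧ v ⬝ᵥ (Q1 + lam2 • Q2).mulVec v = 0 := by
    by_contra hcon
    push Not at hcon
    obtain ⟨ε, hε, H⟩ := gtrs_perturb (Q1 + lam2 • Q2) Q2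
      (fun v hv => lt_of_le_of_ne (nn2 v) (hcon v hv).symm)
    have h := (psd (lam2 + ε)).1 ⟨by linarith, mkpsd _ (fun v => by
      have := H ε (by rw [abs_of_pos hε]) v
      rwa [add_assoc, ← add_smul] at this)⟩
    linarith [h.2]
  -- moving along a null direction
  have move : ∀ (l s : ℝ) (v x : Fin n → ℝ), (Q1 + l • Q2).mulVec v = 0 →
      0 < s * (v ⬝ᵥ Q2.mulVec v) → s * f2 x ≤ 0 → s ≠ 0 →
      ∃ y, f2 y = 0 ∧ f1 y ≤ f1 x + l * f2 x := by
    intro l s v x hv hpos hx hs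
    have key : ∀ w : Fin n → ℝ, (Q1 + l • Q2).mulVec w = 0 →
      0 < s * (w ⬝ᵥ Q2.mulVec w) → (b1 ⬝ᵥ w + l * (b2 ⬝ᵥ w)) ≤ 0 →
      ∃ y, f2 y = 0 ∧ f1 y ≤ f1 x + l * f2 x := by
      intro w hw hwpos hlin
      obtain ⟨t, ht, hroot⟩ := gtrs_quad_root (s * (w ⬝ᵥ Q2.mulVec w) / 2)
        (s * (x ⬝ᵥ Q2.mulVec w + b2 ⬝ᵥ w)) (s * f2 x) (by linarith) hx
      have e1 : f1 (x + t • w) = f1 x + t * (x ⬝ᵥ Q1.mulVec w + b1 ⬝ᵥ w)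
          + t ^ 2 / 2 * (w ⬝ᵥ Q1.mulVec w) := by
        rw [hf1, hf1, gtrs_expand Q1 hQ1, dotProduct_add, dotProduct_smul, smul_eq_mul]; ring
      have e2 : f2 (x + t • w) = f2 x + t * (x ⬝ᵥ Q2.mulVec w + b2 ⬝ᵥ w)
          + t ^ 2 / 2 * (w ⬝ᵥ Q2.mulVec w) := by
        rw [hf2, hf2, gtrs_expand Q2 hQ2, dotProduct_add, dotProduct_smul, smul_eq_mul]; ring
      have g1 := gtrs_form Q1 Q2 l x w
      have g2 := gtrs_form Q1 Q2 l w w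
      rw [hw, dotProduct_zero] at g1 g2
      have hy : f2 (x + t • w) = 0 := by
        have : s * f2 (x + t • w) = 0 := by rw [e2, ← hroot]; ring
        exact (mul_eq_zero.1 this).resolve_left hs
      refine ⟨x + t • w, hy, ?_⟩
      have e3 : f1 (x + t • w) + l * f2 (x + t • w) = f1 x + l * f2 x
          + t * (b1 ⬝ᵥ w + l * (b2 ⬝ᵥ w)) := by
        rw [e1, e2]; linear_combination (-t) * g1 - t ^ 2 / 2 * g2
      have h5 : t * (b1 ⬝ᵥ w + l * (b2 ⬝ᵥ w)) ≤ 0 := mul_nonpos_of_nonneg_of_nonpos ht hlin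
      rw [hy] at e3
      linarith
    by_cases hlin : (b1 ⬝ᵥ v + l * (b2 ⬝ᵥ v)) ≤ 0
    · exact key v hv hpos hlin
    · refine key (-v) (by rw [mulVec_neg, hv, neg_zero]) (by simpa [mulVec_neg] using hpos) ?_
      simp only [dotProduct_neg]
      linarith
  have feas : ∀ x, ∃ y, f2 y ≤ 0 ∧ f1 y ≤ max (h1 x) (h2 x) := by
    intro x
    rcases le_or_gt (f2 x) 0 with hx | hx
    · rcases hl1.eq_or_lt with h0 | hpos
      · exact ⟨x, hx, le_max_of_le_left (by rw [hh1, ← h0]; simp)⟩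
      · obtain ⟨v, hv0, hv⟩ := nv1 hpos
        have hne : v ⬝ᵥ (Q1 + lam2 • Q2).mulVec v ≠ 0 := fun h => hv0 (both v hv h)
        have hgt := lt_of_le_of_ne (nn2 v) hne.symm
        have hvb := hv
        rw [gtrs_form] at hvb hgt
        obtain ⟨y, hy, hyb⟩ := move lam1 1 v x (z1 v hv) (by nlinarith) (by linarith) one_ne_zero
        exact ⟨y, hy.le, le_max_of_le_left (by rw [hh1]; exact hyb)⟩
    · obtain ⟨v, hv0, hv⟩ := nv2
      have hne : v ⬝ᵥ (Q1 + lam1 • Q2).mulVec v ≠ 0 := fun h => hv0 (both v h hv)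
      have hgt := lt_of_le_of_ne (nn1 v) hne.symm
      have hvb := hv
      rw [gtrs_form] at hvb hgt
      obtain ⟨y, hy, hyb⟩ := move lam2 (-1) v x (z2 v hv) (by nlinarith) (by linarith) (by norm_num)
      exact ⟨y, hy.le, le_max_of_le_right (by rw [hh2]; exact hyb)⟩
  -- lower bound
  have bdd : ∃ B : ℝ, ∀ x, B ≤ max (h1 x) (h2 x) := by
    set l := (lam1 + lam2) / 2 with hl
    have hpd : (Q1 + l • Q2).PosDef := by
      refine Matrix.PosDef.of_dotProduct_mulVec_pos (herm l) (fun v hv => ?_)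
      have a1 := nn1 v
      have a2 := nn2 v
      have e : v ⬝ᵥ (Q1 + l • Q2).mulVec v = (v ⬝ᵥ (Q1 + lam1 • Q2).mulVec v
          + v ⬝ᵥ (Q1 + lam2 • Q2).mulVec v) / 2 := by
        simp only [gtrs_form, hl]; ring
      simp only [star_trivial]
      rw [e]
      by_contra hcon
      exact hv (both v (by linarith) (by linarith))
    set A := Q1 + l • Q2 with hA
    have hdet : IsUnit A.det := (Matrix.isUnit_iff_isUnit_det A).1 hpd.isUnit
    set x0 : Fin n → ℝ := A⁻¹.mulVec (b1 + l • b2) with hx0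
    have hAx : A.mulVec x0 = b1 + l • b2 := by
      rw [hx0, mulVec_mulVec, Matrix.mul_nonsing_inv A hdet, one_mulVec]
    refine ⟨-(1 / 2) * (x0 ⬝ᵥ A.mulVec x0) + l * c, fun x => ?_⟩
    have hsq : 0 ≤ (x + (1 : ℝ) • x0) ⬝ᵥ A.mulVec (x + (1 : ℝ) • x0) := by
      simpa using hpd.posSemidef.dotProduct_mulVec_nonneg (x + (1 : ℝ) • x0)
    rw [gtrs_expand A (symm l)] at hsq
    have e1 : x ⬝ᵥ A.mulVec x0 = b1 ⬝ᵥ x + l * (b2 ⬝ᵥ x) := by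
      rw [hAx, dotProduct_comm, add_dotProduct, smul_dotProduct, smul_eq_mul]
    rw [e1] at hsq
    have e2 : x ⬝ᵥ A.mulVec x = _ := gtrs_form Q1 Q2 l x x
    rw [e2] at hsq
    have e3 : (h1 x + h2 x) / 2 = f1 x + l * f2 x := by rw [hh1, hh2, hl]; ring
    have e4 : f1 x + l * f2 x = (1 / 2) * (x ⬝ᵥ Q1.mulVec x + l * (x ⬝ᵥ Q2.mulVec x))
        + (b1 ⬝ᵥ x + l * (b2 ⬝ᵥ x)) + l * c := by rw [hf1, hf2]; ring
    have := le_max_left (h1 x) (h2 x)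
    have := le_max_right (h1 x) (h2 x)
    linarith
  obtain ⟨B, hB⟩ := bdd
  have up : ∀ x, f2 x ≤ 0 → max (h1 x) (h2 x) ≤ f1 x := by
    intro x hx
    have := mul_nonpos_of_nonneg_of_nonpos hl1 hx
    have := mul_nonpos_of_nonneg_of_nonpos hl2 hx
    rw [hh1, hh2]
    exact max_le (by linarith) (by linarith)
  apply le_antisymm
  · apply le_csInf (Set.range_nonempty _)
    rintro _ ⟨x, rfl⟩
    obtain ⟨y, hy, hyb⟩ := feas x
    refine le_trans (csInf_le ⟨B, ?_⟩ ⟨y, hy, rfl⟩) hyb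
    rintro _ ⟨z, hz, rfl⟩
    exact (hB z).trans (up z hz)
  · obtain ⟨xb, hxb⟩ := hslater
    refine le_csInf (Set.Nonempty.image f1 (s := {x | f2 x ≤ 0}) ⟨xb, hxb.le⟩) ?_
    rintro _ ⟨x, hx, rfl⟩
    refine le_trans (csInf_le ⟨B, ?_⟩ ⟨x, rfl⟩) (up x hx)
    rintro _ ⟨z, rfl⟩
    exact hB z
end

section
/- Suppose the Slater condition holds and {λ ≥ 0 : Q1 + λQ2 is positive semidefinite} = [λ3, ∞) for some λ3 ≥ 0 (Condition 2). Define h3(x) = f1(x) + λ3·f2(x). Then problem (P) is equivalent to the convex problem (P2): inf{f1(x) : f2(x) ≤ 0} = inf{h3(x) : f2(x) ≤ 0}. -/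
open Matrix

open scoped MatrixOrder Matrix.Norms.L2Operator in
/-- If `A`, `B` are PSD and `ker A` is isotropic for `B`, then `B ≤ K A` for some `K > 0`. -/
lemma psd_dominated {n : ℕ} (A B : Matrix (Fin n) (Fin n) ℝ)
    (hA : A.PosSemidef) (hB : B.PosSemidef)
    (h : ∀ v, A.mulVec v = 0 → v ⬝ᵥ B.mulVec v = 0) :
    ∃ K : ℝ, 0 < K ∧ ∀ x, x ⬝ᵥ B.mulVec x ≤ K * (x ⬝ᵥ A.mulVec x) := by
  obtain ⟨R, rfl⟩ := (CStarAlgebra.nonneg_iff_eq_star_mul_self (a := A)).mp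
    (Matrix.nonneg_iff_posSemidef.mpr hA)
  obtain ⟨S, rfl⟩ := (CStarAlgebra.nonneg_iff_eq_star_mul_self (a := B)).mp
    (Matrix.nonneg_iff_posSemidef.mpr hB)
  have key : ∀ (M : Matrix (Fin n) (Fin n) ℝ) (x : Fin n → ℝ),
      x ⬝ᵥ (star M * M).mulVec x = ∑ i, (M.mulVec x i) ^ 2 := by
    intro M x
    rw [← Matrix.mulVec_mulVec, Matrix.dotProduct_mulVec, Matrix.star_eq_conjTranspose,
      Matrix.conjTranspose_eq_transpose_of_trivial, Matrix.vecMul_transpose]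
    simp [dotProduct, sq]
  have hker : LinearMap.ker R.mulVecLin ≤ LinearMap.ker S.mulVecLin := by
    intro v hv
    simp only [LinearMap.mem_ker, Matrix.mulVecLin_apply] at hv ⊢
    have h1 := h v (by rw [← Matrix.mulVec_mulVec, hv, Matrix.mulVec_zero])
    rw [key, Finset.sum_eq_zero_iff_of_nonneg (fun i _ => sq_nonneg _)] at h1
    funext i
    simpa using h1 i (Finset.mem_univ i)
  obtain ⟨g, hg⟩ := LinearMap.exists_extend
    (((LinearMap.ker R.mulVecLin).liftQ S.mulVecLin hker).comp
      R.mulVecLin.quotKerEquivRange.symm.toLinearMap)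
  have hgx : ∀ x, S.mulVec x = (LinearMap.toMatrix' g).mulVec (R.mulVec x) := by
    intro x
    have h1 := LinearMap.congr_fun hg ⟨R.mulVecLin x, LinearMap.mem_range_self _ x⟩
    have h2 : R.mulVecLin.quotKerEquivRange.symm
        ⟨R.mulVecLin x, LinearMap.mem_range_self _ x⟩
        = (LinearMap.ker R.mulVecLin).mkQ x :=
      LinearMap.quotKerEquivRange_symm_apply_image _ x _
    rw [LinearMap.comp_apply, LinearMap.comp_apply, LinearEquiv.coe_coe, h2,
      Submodule.mkQ_apply, Submodule.liftQ_apply] at h1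
    rw [LinearMap.toMatrix'_mulVec]
    exact h1.symm
  set C := LinearMap.toMatrix' g
  refine ⟨(∑ i, ∑ j, C i j ^ 2) + 1, by positivity, ?_⟩
  intro x
  rw [key, key, hgx]
  set u := R.mulVec x
  have hu : 0 ≤ ∑ i, u i ^ 2 := Finset.sum_nonneg fun i _ => sq_nonneg _
  have hcs : ∑ i, (C.mulVec u i) ^ 2 ≤ (∑ i, ∑ j, C i j ^ 2) * ∑ i, u i ^ 2 := by
    rw [Finset.sum_mul]
    refine Finset.sum_le_sum fun i _ => ?_
    exact Finset.sum_mul_sq_le_sq_mul_sq Finset.univ (C i) u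
  linarith

/-- Under Condition 2 (`I_PSD = [λ3, ∞)`) and the Slater condition, the GTRS (P)
is equivalent to the convex problem (P2): minimize `h3 = f1 + λ3 f2` over `f2 ≤ 0`. -/
theorem gtrs_equiv_CQR_cond2
    (n : ℕ) (Q1 Q2 : Matrix (Fin n) (Fin n) ℝ)
    (hQ1 : Q1.IsSymm) (hQ2 : Q2.IsSymm)
    (b1 b2 : Fin n → ℝ) (c : ℝ)
    (f1 f2 : (Fin n → ℝ) → ℝ)
    (hf1 : ∀ x, f1 x = (1 / 2) * (x ⬝ᵥ Q1.mulVec x) + b1 ⬝ᵥ x)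
    (hf2 : ∀ x, f2 x = (1 / 2) * (x ⬝ᵥ Q2.mulVec x) + b2 ⬝ᵥ x + c)
    (hslater : ∃ xbar : Fin n → ℝ, f2 xbar < 0)
    (lam3 : ℝ) (hlam3 : 0 ≤ lam3)
    (hcond2 : {lam : ℝ | 0 ≤ lam ∧ (Q1 + lam • Q2).PosSemidef} = Set.Ici lam3)
    (h3 : (Fin n → ℝ) → ℝ)
    (hh3 : ∀ x, h3 x = f1 x + lam3 * f2 x) :
    sInf (f1 '' {x | f2 x ≤ 0}) = sInf (h3 '' {x | f2 x ≤ 0}) := by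
  have hmem : ∀ l, lam3 ≤ l → (Q1 + l • Q2).PosSemidef := by
    intro l hl
    have : l ∈ {lam : ℝ | 0 ≤ lam ∧ (Q1 + lam • Q2).PosSemidef} := by rw [hcond2]; exact hl
    exact this.2
  have hA := hmem lam3 le_rfl
  have hquad : ∀ (l : ℝ) (x : Fin n → ℝ), x ⬝ᵥ (Q1 + l • Q2).mulVec x
      = x ⬝ᵥ Q1.mulVec x + l * (x ⬝ᵥ Q2.mulVec x) := by
    intro l x
    rw [Matrix.add_mulVec, Matrix.smul_mulVec, dotProduct_add, dotProduct_smul, smul_eq_mul]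
  have hherm : ∀ l : ℝ, (Q1 + l • Q2).IsHermitian := by
    intro l
    rw [Matrix.IsHermitian, Matrix.conjTranspose_eq_transpose_of_trivial, Matrix.transpose_add,
      Matrix.transpose_smul, hQ1.eq, hQ2.eq]
  have hB : Q2.PosSemidef := by
    refine Matrix.PosSemidef.of_dotProduct_mulVec_nonneg ?_ ?_
    · rw [Matrix.IsHermitian, Matrix.conjTranspose_eq_transpose_of_trivial, hQ2.eq]
    intro x
    rw [star_trivial]
    by_contra hneg
    push Not at hneg
    set q := x ⬝ᵥ Q2.mulVec x with hq
    set a := x ⬝ᵥ (Q1 + lam3 • Q2).mulVec x with ha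
    have ha0 : 0 ≤ a := by simpa using hA.dotProduct_mulVec_nonneg x
    have hs : 0 ≤ (a + 1) / (-q) := by apply div_nonneg <;> linarith
    have h1 : 0 ≤ x ⬝ᵥ (Q1 + (lam3 + (a + 1) / (-q)) • Q2).mulVec x := by
      simpa using (hmem (lam3 + (a + 1) / (-q)) (by linarith)).dotProduct_mulVec_nonneg x
    rw [hquad] at h1
    rw [hquad] at ha
    have h2 : (a + 1) / (-q) * q = -(a + 1) := by
      have : q ≠ 0 := hneg.ne
      field_simp
    rw [← hq] at h1 ha
    nlinarith
  have hle : ∀ x, f2 x ≤ 0 → h3 x ≤ f1 x := by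
    intro x hx
    rw [hh3]
    nlinarith
  have hex : ∀ x, f2 x ≤ 0 → ∃ y, f2 y ≤ 0 ∧ f1 y ≤ h3 x := by
    intro x hx
    rcases hlam3.eq_or_lt with h0 | hpos
    · exact ⟨x, hx, by rw [hh3, ← h0]; simp⟩
    have hv : ∃ v, (Q1 + lam3 • Q2).mulVec v = 0 ∧ v ⬝ᵥ Q2.mulVec v ≠ 0 := by
      by_contra hcon
      push Not at hcon
      obtain ⟨K, hK, hdom⟩ := psd_dominated _ _ hA hB hcon
      set e := min lam3 (1 / K) with he
      have he0 : 0 < e := lt_min hpos (by positivity)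
      have heK : e * K ≤ 1 := by
        calc e * K ≤ 1 / K * K := by gcongr; exact min_le_right _ _
          _ = 1 := by field_simp
      have hin : lam3 - e ∈ {lam : ℝ | 0 ≤ lam ∧ (Q1 + lam • Q2).PosSemidef} := by
        refine ⟨by linarith [min_le_left lam3 (1 / K)], ?_⟩
        refine Matrix.PosSemidef.of_dotProduct_mulVec_nonneg (hherm _) ?_
        intro z
        rw [star_trivial, hquad]
        have h1 := hdom z
        have h2 : 0 ≤ z ⬝ᵥ (Q1 + lam3 • Q2).mulVec z := by
          simpa using hA.dotProduct_mulVec_nonneg z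
        have h3 := mul_le_mul_of_nonneg_left h1 he0.le
        have h4 := mul_le_mul_of_nonneg_right heK h2
        rw [hquad] at h2 h3 h4
        nlinarith
      rw [hcond2, Set.mem_Ici] at hin
      linarith
    have hv' : ∃ v, (Q1 + lam3 • Q2).mulVec v = 0 ∧ v ⬝ᵥ Q2.mulVec v ≠ 0 ∧
        b1 ⬝ᵥ v + lam3 * (b2 ⬝ᵥ v) ≤ 0 := by
      obtain ⟨v, h1, h2⟩ := hv
      rcases le_total (b1 ⬝ᵥ v + lam3 * (b2 ⬝ᵥ v)) 0 with h | h
      · exact ⟨v, h1, h2, h⟩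
      · refine ⟨-v, by rw [Matrix.mulVec_neg, h1, neg_zero], ?_, ?_⟩
        · simpa [Matrix.mulVec_neg] using h2
        · simp only [dotProduct_neg]; linarith
    obtain ⟨v, hAv, hne, hslope⟩ := hv'
    have hq0 : 0 < v ⬝ᵥ Q2.mulVec v :=
      lt_of_le_of_ne (by simpa using hB.dotProduct_mulVec_nonneg v) (Ne.symm hne)
    have hexp : ∀ (Q : Matrix (Fin n) (Fin n) ℝ) (t : ℝ), (x + t • v) ⬝ᵥ Q.mulVec (x + t • v)
        = x ⬝ᵥ Q.mulVec x + t * (x ⬝ᵥ Q.mulVec v + v ⬝ᵥ Q.mulVec x)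
          + t ^ 2 * (v ⬝ᵥ Q.mulVec v) := by
      intro Q t
      simp only [Matrix.mulVec_add, Matrix.mulVec_smul, dotProduct_add, add_dotProduct,
        dotProduct_smul, smul_dotProduct, smul_eq_mul]
      ring
    have hlin : ∀ (b : Fin n → ℝ) (t : ℝ), b ⬝ᵥ (x + t • v) = b ⬝ᵥ x + t * (b ⬝ᵥ v) := by
      intro b t
      simp [dotProduct_add, dotProduct_smul]
    have hh3q : ∀ z, h3 z = (1 / 2) * (z ⬝ᵥ (Q1 + lam3 • Q2).mulVec z)
        + (b1 ⬝ᵥ z + lam3 * (b2 ⬝ᵥ z)) + lam3 * c := by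
      intro z
      rw [hh3, hf1, hf2, hquad]; ring
    have hvA : v ⬝ᵥ (Q1 + lam3 • Q2).mulVec x = 0 := by
      have hT : (Q1 + lam3 • Q2)ᵀ = Q1 + lam3 • Q2 := by
        rw [Matrix.transpose_add, Matrix.transpose_smul, hQ1.eq, hQ2.eq]
      rw [Matrix.dotProduct_mulVec, ← Matrix.mulVec_transpose, hT, hAv, zero_dotProduct]
    obtain ⟨t, ht0, ht⟩ : ∃ t : ℝ, 0 ≤ t ∧ f2 (x + t • v) = 0 := by
      set q := v ⬝ᵥ Q2.mulVec v with hq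
      obtain ⟨p, hp⟩ : ∃ p, p = (1 / 2) * (x ⬝ᵥ Q2.mulVec v + v ⬝ᵥ Q2.mulVec x) + b2 ⬝ᵥ v :=
        ⟨_, rfl⟩
      have hform : ∀ t : ℝ, f2 (x + t • v) = f2 x + t * p + t ^ 2 * q / 2 := by
        intro t
        rw [hf2, hf2, hexp, hlin, hp, ← hq]; ring
      have hD : p ^ 2 ≤ p ^ 2 - 2 * q * f2 x := by nlinarith
      have hD0 : 0 ≤ p ^ 2 - 2 * q * f2 x := le_trans (sq_nonneg p) hD
      have hs := Real.sq_sqrt hD0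
      have hps : p ≤ Real.sqrt (p ^ 2 - 2 * q * f2 x) := Real.le_sqrt_of_sq_le hD
      refine ⟨(-p + Real.sqrt (p ^ 2 - 2 * q * f2 x)) / q,
        div_nonneg (by linarith) hq0.le, ?_⟩
      rw [hform]
      set s := Real.sqrt (p ^ 2 - 2 * q * f2 x)
      field_simp
      linear_combination hs
    refine ⟨x + t • v, ht.le, ?_⟩
    have h1 : f1 (x + t • v) = h3 (x + t • v) := by rw [hh3, ht]; ring
    rw [h1, hh3q, hh3q, hexp, hlin, hlin, hvA, hAv]
    simp only [dotProduct_zero]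
    nlinarith [mul_nonneg ht0 (neg_nonneg.mpr hslope)]
  have hlb : lowerBounds (f1 '' {x | f2 x ≤ 0}) = lowerBounds (h3 '' {x | f2 x ≤ 0}) := by
    ext m
    simp only [mem_lowerBounds, Set.forall_mem_image, Set.mem_ofPred_eq]
    constructor
    · intro H x hx
      obtain ⟨y, hy, hyx⟩ := hex x hx
      exact (H hy).trans hyx
    · intro H x hx
      exact (H hx).trans (hle x hx)
  obtain ⟨x0, hx0⟩ := hslater
  by_cases hb : BddBelow (f1 '' {x | f2 x ≤ 0})
  · have hb' : BddBelow (h3 '' {x | f2 x ≤ 0}) := by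
      unfold BddBelow at hb ⊢; rwa [← hlb]
    have g1 := isGLB_csInf (Set.Nonempty.image f1 ⟨x0, hx0.le⟩) hb
    have g2 := isGLB_csInf (Set.Nonempty.image h3 ⟨x0, hx0.le⟩) hb'
    unfold IsGLB at g1
    rw [hlb] at g1
    exact g1.unique g2
  · have hb' : ¬ BddBelow (h3 '' {x | f2 x ≤ 0}) := by
      unfold BddBelow at hb ⊢; rwa [← hlb]
    rw [Real.sInf_of_not_bddBelow hb, Real.sInf_of_not_bddBelow hb']
end

section
/- Suppose {λ ≥ 0 : Q1 + λQ2 is positive semidefinite} = [λ1, λ2] with λ1 < λ2 (Condition 1) and null(Q1) ∩ null(Q2) = {0}. Let A1 = Q1 + λ1·Q2 and A2 = Q1 + λ2·Q2. Then A1 and A2 are simultaneously diagonalizable by congruence: there exists an invertible n×n matrix S such that SᵀA1S and SᵀA2S are both diagonal matrices. -/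
open Matrix

lemma orth_diag_aux {n : ℕ} (A : Matrix (Fin n) (Fin n) ℝ) (hA : A.IsHermitian) :
    ∃ U : Matrix (Fin n) (Fin n) ℝ, Uᵀ * U = 1 ∧ Uᵀ * A * U = diagonal hA.eigenvalues := by
  refine ⟨(hA.eigenvectorUnitary : Matrix (Fin n) (Fin n) ℝ), ?_, ?_⟩
  · have h := Unitary.coe_star_mul_self hA.eigenvectorUnitary
    rwa [star_eq_conjTranspose, conjTranspose_eq_transpose_of_trivial] at h
  · have h := hA.conjStarAlgAut_star_eigenvectorUnitary
    rw [Unitary.conjStarAlgAut_apply] at h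
    simpa [star_eq_conjTranspose, conjTranspose_eq_transpose_of_trivial, Function.comp_def] using h

lemma posDef_congr_one_aux {n : ℕ} (B : Matrix (Fin n) (Fin n) ℝ) (hB : B.PosDef) :
    ∃ T : Matrix (Fin n) (Fin n) ℝ, Tᵀ * B * T = 1 := by
  obtain ⟨U, -, h⟩ := orth_diag_aux B hB.isHermitian
  let D : Matrix (Fin n) (Fin n) ℝ := diagonal fun i => (√(hB.isHermitian.eigenvalues i))⁻¹
  refine ⟨U * D, ?_⟩
  have : (U * D)ᵀ * B * (U * D) = Dᵀ * (Uᵀ * B * U) * D := by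
    rw [transpose_mul]; simp only [Matrix.mul_assoc]
  rw [this, h]
  simp only [D, diagonal_transpose, diagonal_mul_diagonal]
  rw [← diagonal_one]
  congr 1
  funext i
  have hp := hB.eigenvalues_pos i
  have h0 : √(hB.isHermitian.eigenvalues i) ≠ 0 := (Real.sqrt_pos.2 hp).ne'
  have h1 := Real.mul_self_sqrt hp.le
  field_simp
  nlinarith [h1]

/-- Under Condition 1 and triviality of the common null space, the matrices
`A1 = Q1 + λ1 Q2` and `A2 = Q1 + λ2 Q2` are simultaneously diagonalizable by a
congruence transformation. -/
theorem simultaneous_diagonalization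
    (n : ℕ) (Q1 Q2 : Matrix (Fin n) (Fin n) ℝ)
    (hQ1 : Q1.IsSymm) (hQ2 : Q2.IsSymm)
    (lam1 lam2 : ℝ) (hlt : lam1 < lam2)
    (hcond1 : {lam : ℝ | 0 ≤ lam ∧ (Q1 + lam • Q2).PosSemidef} = Set.Icc lam1 lam2)
    (hnull : ∀ v : Fin n → ℝ, Q1.mulVec v = 0 → Q2.mulVec v = 0 → v = 0)
    (A1 A2 : Matrix (Fin n) (Fin n) ℝ)
    (hA1 : A1 = Q1 + lam1 • Q2) (hA2 : A2 = Q1 + lam2 • Q2) :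
    ∃ S : Matrix (Fin n) (Fin n) ℝ, IsUnit S.det ∧
      (Sᵀ * A1 * S).IsDiag ∧ (Sᵀ * A2 * S).IsDiag := by
  have m1 : lam1 ∈ {lam : ℝ | 0 ≤ lam ∧ (Q1 + lam • Q2).PosSemidef} :=
    hcond1 ▸ Set.left_mem_Icc.2 hlt.le
  have m2 : lam2 ∈ {lam : ℝ | 0 ≤ lam ∧ (Q1 + lam • Q2).PosSemidef} :=
    hcond1 ▸ Set.right_mem_Icc.2 hlt.le
  have p1 : A1.PosSemidef := hA1 ▸ m1.2
  have p2 : A2.PosSemidef := hA2 ▸ m2.2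
  have hB : (A1 + A2).PosDef := by
    refine PosDef.of_dotProduct_mulVec_pos (p1.add p2).isHermitian fun x hx => ?_
    have q1 := p1.dotProduct_mulVec_nonneg x
    have q2 := p2.dotProduct_mulVec_nonneg x
    rw [add_mulVec, dotProduct_add]
    refine lt_of_le_of_ne (add_nonneg q1 q2) fun h => hx ?_
    have e1 := (p1.dotProduct_mulVec_zero_iff x).1 (by linarith)
    have e2 := (p2.dotProduct_mulVec_zero_iff x).1 (by linarith)
    rw [hA1, add_mulVec, smul_mulVec] at e1
    rw [hA2, add_mulVec, smul_mulVec] at e2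
    have e3 : (lam2 - lam1) • (Q2 *ᵥ x) = 0 := by
      rw [sub_smul, ← add_sub_add_left_eq_sub _ _ (Q1 *ᵥ x), e1, e2, sub_zero]
    have e4 : Q2 *ᵥ x = 0 := (smul_eq_zero.1 e3).resolve_left (sub_pos.2 hlt).ne'
    refine hnull x ?_ e4
    simpa [e4] using e1
  obtain ⟨T, hT⟩ := posDef_congr_one_aux _ hB
  have hH : (Tᵀ * A1 * T).IsHermitian := by
    have := (p1.conjTranspose_mul_mul_same T).isHermitian
    rwa [conjTranspose_eq_transpose_of_trivial] at this
  obtain ⟨V, hV, hd⟩ := orth_diag_aux _ hH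
  have key : ∀ M : Matrix (Fin n) (Fin n) ℝ, (T * V)ᵀ * M * (T * V) = Vᵀ * (Tᵀ * M * T) * V := by
    intro M
    rw [transpose_mul]; simp only [Matrix.mul_assoc]
  have hone : (T * V)ᵀ * (A1 + A2) * (T * V) = 1 := by
    rw [key, hT, Matrix.mul_one, hV]
  refine ⟨T * V, ?_, ?_, ?_⟩
  · have := congrArg Matrix.det hone
    rw [det_mul, det_one] at this
    exact IsUnit.of_mul_eq_one_right _ this
  · rw [key, hd]
    exact isDiag_diagonal _
  · have h2 : (T * V)ᵀ * A2 * (T * V) = 1 - (T * V)ᵀ * A1 * (T * V) := by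
      rw [← hone, Matrix.mul_add, Matrix.add_mul, add_sub_cancel_left]
    rw [h2, key, hd]
    exact isDiag_one.sub (isDiag_diagonal _)
end

section
/- Suppose {λ ≥ 0 : Q1 + λQ2 is positive semidefinite} = [λ1, λ2] with λ1 < λ2 (Condition 1) and null(Q1) ∩ null(Q2) = {0}. Let A1 = Q1 + λ1·Q2 and A2 = Q1 + λ2·Q2. Then for every nonzero vector d with A2·d = 0, it holds that dᵀA1d > 0. -/
open Matrix

/-- Under Condition 1 and triviality of the common null space, every nonzero
vector `d` in the null space of `A2 = Q1 + λ2 Q2` satisfies `dᵀ A1 d > 0`,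
where `A1 = Q1 + λ1 Q2`. -/
theorem posQuadForm_on_nullspace
    (n : ℕ) (Q1 Q2 : Matrix (Fin n) (Fin n) ℝ)
    (hQ1 : Q1.IsSymm) (hQ2 : Q2.IsSymm)
    (lam1 lam2 : ℝ) (hlt : lam1 < lam2)
    (hcond1 : {lam : ℝ | 0 ≤ lam ∧ (Q1 + lam • Q2).PosSemidef} = Set.Icc lam1 lam2)
    (hnull : ∀ v : Fin n → ℝ, Q1.mulVec v = 0 → Q2.mulVec v = 0 → v = 0)
    (A1 A2 : Matrix (Fin n) (Fin n) ℝ)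
    (hA1 : A1 = Q1 + lam1 • Q2) (hA2 : A2 = Q1 + lam2 • Q2) :
    ∀ d : Fin n → ℝ, d ≠ 0 → A2.mulVec d = 0 → 0 < d ⬝ᵥ A1.mulVec d := by
  intro d hd h2
  have hmem : lam1 ∈ {lam : ℝ | 0 ≤ lam ∧ (Q1 + lam • Q2).PosSemidef} := by
    rw [hcond1]
    exact ⟨le_refl _, hlt.le⟩
  have hP : A1.PosSemidef := hA1 ▸ hmem.2
  have h0 : 0 ≤ d ⬝ᵥ A1.mulVec d := by
    simpa using hP.dotProduct_mulVec_nonneg d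
  refine lt_of_le_of_ne h0 fun he => hd ?_
  have h1 : A1.mulVec d = 0 := (hP.dotProduct_mulVec_zero_iff d).1 (by simpa using he.symm)
  rw [hA1, Matrix.add_mulVec, Matrix.smul_mulVec] at h1
  rw [hA2, Matrix.add_mulVec, Matrix.smul_mulVec] at h2
  have h3 : (lam2 - lam1) • Q2.mulVec d = 0 := by
    rw [sub_smul, ← add_sub_add_left_eq_sub _ _ (Q1.mulVec d), h1, h2, sub_zero]
  have h4 : Q2.mulVec d = 0 := (smul_eq_zero.1 h3).resolve_left (sub_pos.2 hlt).ne'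
  refine hnull d ?_ h4
  simpa [h4] using h1
end

section
/- Suppose Condition 1 holds (I_PSD = [λ1, λ2] with λ1 < λ2), the Slater condition holds, and null(Q1) ∩ null(Q2) = {0}. Let x* be a global minimizer of H(x) = max{h1(x), h2(x)} with t* = H(x*), and suppose h1(x*) < t* and h2(x*) = t*. Then for any nonzero vector v with A2·v = 0, the quadratic equation in θ, h1(x* + θv) = t*, i.e., (1/2)(vᵀA1v)θ² + (vᵀA1x* + a1ᵀv)θ + h1(x*) − t* = 0 where a1 = b1 + λ1·b2, has a real solution; and for any solution θ̃ of this equation, the point x̃ = x* + θ̃·v is an optimal solution of problem (P): f2(x̃) ≤ 0 and f1(x̃) = inf{f1(x) : f2(x) ≤ 0}. -/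
open Matrix

theorem quad_expand {n : ℕ} (Q : Matrix (Fin n) (Fin n) ℝ) (x d : Fin n → ℝ) (t : ℝ) :
    (x + t • d) ⬝ᵥ Q.mulVec (x + t • d) =
      x ⬝ᵥ Q.mulVec x + t * (x ⬝ᵥ Q.mulVec d + d ⬝ᵥ Q.mulVec x) + t ^ 2 * (d ⬝ᵥ Q.mulVec d) := by
  simp only [mulVec_add, mulVec_smul, add_dotProduct, dotProduct_add, smul_dotProduct,
    dotProduct_smul, smul_eq_mul]
  ring

theorem slope_zero (a g1 p1 g2 p2 : ℝ) (ha : a < 0)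
    (h : ∀ t : ℝ, 0 ≤ max (a + t * g1 + t ^ 2 * p1) (t * g2 + t ^ 2 * p2)) : g2 = 0 := by
  by_contra hg
  have c1 : Continuous fun s : ℝ => a + (-s * g2) * g1 + (-s * g2) ^ 2 * p1 := by fun_prop
  have c2 : Continuous fun s : ℝ => -1 + s * p2 := by fun_prop
  have e1 := (c1.tendsto 0).eventually_lt_const (u := 0) (by simpa using ha)
  have e2 := (c2.tendsto 0).eventually_lt_const (u := 0) (by simp)
  have e := (e1.and e2)
  obtain ⟨ε, hε, he⟩ := Metric.eventually_nhds_iff.1 e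
  obtain ⟨k1, k2⟩ := he (y := ε / 2) (by
    rw [Real.dist_eq, sub_zero, abs_of_pos (by positivity)]; linarith)
  have := h (-(ε / 2) * g2)
  have hp : 0 < (ε / 2) * g2 ^ 2 := by positivity
  have k3 : -(ε / 2) * g2 * g2 + (-(ε / 2) * g2) ^ 2 * p2 < 0 := by
    have := mul_neg_of_pos_of_neg hp k2
    nlinarith
  rcases le_max_iff.1 this with h' | h' <;> linarith

theorem quad_root (p q r : ℝ) (hp : 0 < p) (hr : r < 0) : ∃ t : ℝ, r + t * q + t ^ 2 * p = 0 := by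
  have hd : 0 ≤ discrim p q r := by unfold discrim; nlinarith [mul_pos hp (neg_pos.2 hr), sq_nonneg q]
  obtain ⟨t, ht⟩ := exists_quadratic_eq_zero hp.ne' ⟨√(discrim p q r), (Real.mul_self_sqrt hd).symm⟩
  exact ⟨t, by linarith⟩

/-- Recovery of an optimal solution of the GTRS (P) from a minimizer `x*` of the
minimax reformulation in the case `h1(x*) < t*` and `h2(x*) = t*`: for any nonzero
`v` in the null space of `A2`, the quadratic equation `h1(x* + θ v) = t*` has a real
solution, and every such solution yields an optimal solution `x* + θ v` of (P). -/
theorem recover_case2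
    (n : ℕ) (Q1 Q2 : Matrix (Fin n) (Fin n) ℝ)
    (hQ1 : Q1.IsSymm) (hQ2 : Q2.IsSymm)
    (b1 b2 : Fin n → ℝ) (c : ℝ)
    (f1 f2 : (Fin n → ℝ) → ℝ)
    (hf1 : ∀ x, f1 x = (1 / 2) * (x ⬝ᵥ Q1.mulVec x) + b1 ⬝ᵥ x)
    (hf2 : ∀ x, f2 x = (1 / 2) * (x ⬝ᵥ Q2.mulVec x) + b2 ⬝ᵥ x + c)
    (hslater : ∃ xbar : Fin n → ℝ, f2 xbar < 0)
    (hnull : ∀ v : Fin n → ℝ, Q1.mulVec v = 0 → Q2.mulVec v = 0 → v = 0)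
    (lam1 lam2 : ℝ) (hlt : lam1 < lam2)
    (hcond1 : {lam : ℝ | 0 ≤ lam ∧ (Q1 + lam • Q2).PosSemidef} = Set.Icc lam1 lam2)
    (A1 A2 : Matrix (Fin n) (Fin n) ℝ)
    (hA1 : A1 = Q1 + lam1 • Q2) (hA2 : A2 = Q1 + lam2 • Q2)
    (h1 h2 H : (Fin n → ℝ) → ℝ)
    (hh1 : ∀ x, h1 x = f1 x + lam1 * f2 x)
    (hh2 : ∀ x, h2 x = f1 x + lam2 * f2 x)
    (hH : ∀ x, H x = max (h1 x) (h2 x))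
    (xstar : Fin n → ℝ) (hmin : ∀ y, H xstar ≤ H y)
    (tstar : ℝ) (htstar : tstar = H xstar)
    (hc1 : h1 xstar < tstar) (hc2 : h2 xstar = tstar) :
    ∀ v : Fin n → ℝ, v ≠ 0 → A2.mulVec v = 0 →
      (∃ θ : ℝ, h1 (xstar + θ • v) = tstar) ∧
      (∀ θ : ℝ, h1 (xstar + θ • v) = tstar →
        f2 (xstar + θ • v) ≤ 0 ∧
        f1 (xstar + θ • v) = sInf (f1 '' {x | f2 x ≤ 0})) := by
  have m1 : lam1 ∈ {lam : ℝ | 0 ≤ lam ∧ (Q1 + lam • Q2).PosSemidef} := by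
    rw [hcond1]; exact ⟨le_rfl, hlt.le⟩
  have m2 : lam2 ∈ {lam : ℝ | 0 ≤ lam ∧ (Q1 + lam • Q2).PosSemidef} := by
    rw [hcond1]; exact ⟨hlt.le, le_rfl⟩
  obtain ⟨-, P1⟩ := m1
  obtain ⟨l2, P2⟩ := m2
  rw [← hA1] at P1
  rw [← hA2] at P2
  have exp : ∀ (lam : ℝ) (d : Fin n → ℝ), ∃ g : ℝ, ∀ t : ℝ,
      f1 (xstar + t • d) + lam * f2 (xstar + t • d) = (f1 xstar + lam * f2 xstar) + t * g
        + t ^ 2 * (1 / 2 * (d ⬝ᵥ (Q1 + lam • Q2).mulVec d)) := by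
    intro lam d
    refine ⟨1 / 2 * (xstar ⬝ᵥ Q1.mulVec d + d ⬝ᵥ Q1.mulVec xstar) + b1 ⬝ᵥ d
      + lam * (1 / 2 * (xstar ⬝ᵥ Q2.mulVec d + d ⬝ᵥ Q2.mulVec xstar) + b2 ⬝ᵥ d), fun t => ?_⟩
    simp only [hf1, hf2, quad_expand, add_mulVec, smul_mulVec, dotProduct_add, dotProduct_smul,
      smul_eq_mul]
    ring
  have key : ∀ (d : Fin n → ℝ) (t : ℝ), h2 (xstar + t • d) =
      tstar + t ^ 2 * (1 / 2 * (d ⬝ᵥ A2.mulVec d)) := by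
    intro d t
    obtain ⟨g1, e1⟩ := exp lam1 d
    obtain ⟨g2, e2⟩ := exp lam2 d
    simp only [← hh1, ← hh2, ← hA1, ← hA2] at e1 e2
    have : g2 = 0 := by
      refine slope_zero (h1 xstar - tstar) g1 (1 / 2 * (d ⬝ᵥ A1.mulVec d)) g2
        (1 / 2 * (d ⬝ᵥ A2.mulVec d)) (by linarith) fun s => ?_
      have := hmin (xstar + s • d)
      rw [← htstar, hH, e1, e2, hc2] at this
      rw [le_max_iff] at this ⊢
      rcases this with h | h
      · left; linarith
      · right; linarith
    rw [e2, this, hc2]; ring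
  have hge : ∀ y, tstar ≤ h2 y := by
    intro y
    have := key (y - xstar) 1
    rw [one_smul, add_sub_cancel] at this
    rw [this]
    have := P2.dotProduct_mulVec_nonneg (y - xstar)
    simp only [star_trivial] at this
    linarith
  intro v hv hAv
  have hp : 0 < v ⬝ᵥ A1.mulVec v := by
    have h0 := P1.dotProduct_mulVec_nonneg v
    have hz := P1.dotProduct_mulVec_zero_iff v
    simp only [star_trivial] at h0 hz
    refine lt_of_le_of_ne h0 fun h => hv ?_
    have hA := hz.1 h.symm
    rw [hA1, add_mulVec, smul_mulVec] at hA
    rw [hA2, add_mulVec, smul_mulVec] at hAv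
    have q2 : Q2.mulVec v = 0 := by
      have : (lam2 - lam1) • Q2.mulVec v = 0 := by
        rw [sub_smul, ← add_sub_add_left_eq_sub _ _ (Q1.mulVec v), hA, hAv, sub_zero]
      exact (smul_eq_zero.1 this).resolve_left (by linarith)
    refine hnull v ?_ q2
    simpa [q2] using hA
  constructor
  · obtain ⟨g1, e1⟩ := exp lam1 v
    simp only [← hh1, ← hA1] at e1
    obtain ⟨t, ht⟩ := quad_root (1 / 2 * (v ⬝ᵥ A1.mulVec v)) g1 (h1 xstar - tstar)
      (by linarith) (by linarith)
    exact ⟨t, by rw [e1]; linarith⟩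
  · intro t ht
    have k := key v t
    rw [hAv, dotProduct_zero, mul_zero, mul_zero, add_zero, hh2] at k
    rw [hh1] at ht
    have z : f2 (xstar + t • v) = 0 := by
      have : (lam2 - lam1) * f2 (xstar + t • v) = 0 := by linarith
      exact (mul_eq_zero.1 this).resolve_left (by linarith)
    rw [z, mul_zero, add_zero] at k
    have hl : IsLeast (f1 '' {x | f2 x ≤ 0}) (f1 (xstar + t • v)) := by
      refine ⟨⟨_, z.le, rfl⟩, ?_⟩
      rintro _ ⟨y, hy, rfl⟩
      have hy' : f2 y ≤ 0 := hy
      have := hge y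
      rw [hh2] at this
      have := mul_nonpos_of_nonneg_of_nonpos l2 hy'
      linarith
    exact ⟨z.le, hl.csInf_eq.symm⟩
end

section
/- Suppose λ0 ≥ 0 is such that Q1 + λ0·Q2 is positive definite, and let x(λ0) = −(Q1 + λ0·Q2)⁻¹(b1 + λ0·b2). If f2(x(λ0)) = 0, then x(λ0) is an optimal solution of problem (P): f2(x(λ0)) ≤ 0 and f1(x(λ0)) = inf{f1(x) : f2(x) ≤ 0}. -/
open Matrix

/-- If `Q1 + λ0 Q2` is positive definite with `λ0 ≥ 0` and the stationary point
`x(λ0) = -(Q1 + λ0 Q2)⁻¹ (b1 + λ0 b2)` satisfies `f2(x(λ0)) = 0`, then `x(λ0)` is an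
optimal solution of the GTRS (P). -/
theorem stationary_point_optimal
    (n : ℕ) (Q1 Q2 : Matrix (Fin n) (Fin n) ℝ)
    (hQ1 : Q1.IsSymm) (hQ2 : Q2.IsSymm)
    (b1 b2 : Fin n → ℝ) (c : ℝ)
    (f1 f2 : (Fin n → ℝ) → ℝ)
    (hf1 : ∀ x, f1 x = (1 / 2) * (x ⬝ᵥ Q1.mulVec x) + b1 ⬝ᵥ x)
    (hf2 : ∀ x, f2 x = (1 / 2) * (x ⬝ᵥ Q2.mulVec x) + b2 ⬝ᵥ x + c)
    (lam0 : ℝ) (hlam0 : 0 ≤ lam0) (hpd : (Q1 + lam0 • Q2).PosDef)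
    (x0 : Fin n → ℝ) (hx0 : x0 = -((Q1 + lam0 • Q2)⁻¹.mulVec (b1 + lam0 • b2)))
    (hzero : f2 x0 = 0) :
    f2 x0 ≤ 0 ∧ f1 x0 = sInf (f1 '' {x | f2 x ≤ 0}) := by
  set A := Q1 + lam0 • Q2 with hA
  set b := b1 + lam0 • b2 with hb
  have hAs : Aᵀ = A := by
    rw [hA, Matrix.transpose_add, Matrix.transpose_smul, hQ1.eq, hQ2.eq]
  have hdet : IsUnit A.det := (Matrix.isUnit_iff_isUnit_det A).1 hpd.isUnit
  have hAx : A.mulVec x0 = -b := by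
    rw [hx0, Matrix.mulVec_neg, Matrix.mulVec_mulVec, Matrix.mul_nonsing_inv A hdet,
      Matrix.one_mulVec]
  have hL : ∀ x, f1 x + lam0 * f2 x
      = (1 / 2) * (x ⬝ᵥ A.mulVec x) + b ⬝ᵥ x + lam0 * c := by
    intro x
    rw [hf1, hf2, hA, hb, Matrix.add_mulVec, Matrix.smul_mulVec, dotProduct_add,
      dotProduct_smul, add_dotProduct, smul_dotProduct]
    simp only [smul_eq_mul]
    ring
  have hmin : ∀ x, f2 x ≤ 0 → f1 x0 ≤ f1 x := by
    intro x hx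
    have h1 : 0 ≤ (x - x0) ⬝ᵥ A.mulVec (x - x0) := by
      simpa using hpd.posSemidef.dotProduct_mulVec_nonneg (x - x0)
    have h2 : x0 ⬝ᵥ A.mulVec x = x ⬝ᵥ A.mulVec x0 := by
      rw [Matrix.dotProduct_mulVec, ← Matrix.mulVec_transpose, hAs, dotProduct_comm]
    rw [Matrix.mulVec_sub, dotProduct_sub, sub_dotProduct, sub_dotProduct, h2, hAx,
      dotProduct_neg, dotProduct_neg, dotProduct_comm x b, dotProduct_comm x0 b] at h1
    have h3 := hL x
    have h4 := hL x0
    rw [hAx, dotProduct_neg, dotProduct_comm x0 b] at h4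
    rw [hzero] at h4
    have h5 : lam0 * f2 x ≤ 0 := mul_nonpos_of_nonneg_of_nonpos hlam0 hx
    linarith
  refine ⟨hzero.le, ?_⟩
  have hleast : IsLeast (f1 '' {x | f2 x ≤ 0}) (f1 x0) := by
    refine ⟨⟨x0, hzero.le, rfl⟩, ?_⟩
    rintro _ ⟨x, hx, rfl⟩
    exact hmin x hx
  exact hleast.csInf_eq.symm
end

section
/- Assume A1 and A2 are positive semidefinite with A1 + A2 positive definite, inf h1 < inf H, and inf h2 < inf H. Let x* be a global minimizer of H. Then there exist constants C > 0 and ε > 0 such that for every x with ‖x − x*‖ ≤ ε and every y ∈ ∂H(x), C·‖y‖ ≥ (H(x) − H(x*))^{1/2}; that is, the Kurdyka–Łojasiewicz property holds at x* with exponent θ = 1/2. -/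
open Matrix RealInnerProductSpace

lemma KL_desc (c p q : ℝ) (hc : c ≤ 0) (h : c < 0 ∨ p < 0) :
    ∀ᶠ t in nhdsWithin (0:ℝ) (Set.Ioi 0), c + t * p + t ^ 2 * q < 0 := by
  rcases h with h | h
  · have : Filter.Tendsto (fun t : ℝ => c + t * p + t ^ 2 * q) (nhdsWithin 0 (Set.Ioi 0))
        (nhds (c + 0 * p + 0 ^ 2 * q)) :=
      (Continuous.tendsto (by fun_prop) 0).mono_left nhdsWithin_le_nhds
    exact this.eventually (gt_mem_nhds (by linarith))
  · have : Filter.Tendsto (fun t : ℝ => p + t * q) (nhdsWithin 0 (Set.Ioi 0))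
        (nhds (p + 0 * q)) :=
      (Continuous.tendsto (by fun_prop) 0).mono_left nhdsWithin_le_nhds
    filter_upwards [this.eventually (gt_mem_nhds (by linarith : p + 0 * q < 0)),
      self_mem_nhdsWithin] with t ht ht0
    have ht0 : 0 < t := ht0
    nlinarith [mul_neg_of_pos_of_neg ht0 ht]

lemma KL_coercive {E : Type*} [NormedAddCommGroup E] [InnerProductSpace ℝ E]
    [FiniteDimensional ℝ E] (T : E →ₗ[ℝ] E) (hT : ∀ x, x ≠ 0 → 0 < ⟪x, T x⟫) :
    ∃ μ > 0, ∀ x, μ * ‖x‖ ^ 2 ≤ ⟪x, T x⟫ := by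
  have hc : Continuous T := T.continuous_of_finiteDimensional
  rcases (Metric.sphere (0:E) 1).eq_empty_or_nonempty with he | hne
  · refine ⟨1, one_pos, fun x => ?_⟩
    by_cases hx : x = 0
    · simp [hx]
    · have : ‖x‖⁻¹ • x ∈ Metric.sphere (0:E) 1 := by
        simp [norm_smul, hx]
      simp [he] at this
  · obtain ⟨u, hu, hmin⟩ := (isCompact_sphere (0:E) 1).exists_isMinOn hne
      (f := fun x => ⟪x, T x⟫) (by fun_prop)
    have hu1 : ‖u‖ = 1 := by simpa using hu
    refine ⟨⟪u, T u⟫, hT u (by rintro rfl; simp at hu1), fun x => ?_⟩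
    by_cases hx : x = 0
    · simp [hx]
    · have hxs : ‖x‖⁻¹ • x ∈ Metric.sphere (0:E) 1 := by
        simp [norm_smul, hx]
      have h := hmin hxs
      have hn : 0 < ‖x‖ := norm_pos_iff.2 hx
      simp only [Set.mem_ofPred_eq, map_smul, inner_smul_left, inner_smul_right] at h
      simp only [RCLike.conj_to_real] at h
      calc _ ≤ (‖x‖⁻¹ * (‖x‖⁻¹ * ⟪x, T x⟫)) * ‖x‖ ^ 2 := by gcongr
        _ = _ := by field_simp

lemma KL_abs {E : Type*} [NormedAddCommGroup E] [InnerProductSpace ℝ E]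
    [FiniteDimensional ℝ E] (T1 T2 : E →ₗ[ℝ] E)
    (hp1 : ∀ x, 0 ≤ ⟪x, T1 x⟫) (hp2 : ∀ x, 0 ≤ ⟪x, T2 x⟫)
    (hpd : ∀ x, x ≠ 0 → 0 < ⟪x, (T1 + T2) x⟫)
    (h1 h2 : E → ℝ) (g1 g2 : E → E)
    (e1 : ∀ x z, h1 z = h1 x + ⟪g1 x, z - x⟫ + 1 / 2 * ⟪z - x, T1 (z - x)⟫)
    (e2 : ∀ x z, h2 z = h2 x + ⟪g2 x, z - x⟫ + 1 / 2 * ⟪z - x, T2 (z - x)⟫)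
    (s : E) (hmin : ∀ y, max (h1 s) (h2 s) ≤ max (h1 y) (h2 y))
    (hi1 : ∃ x, h1 x < max (h1 s) (h2 s)) (hi2 : ∃ x, h2 x < max (h1 s) (h2 s)) :
    ∃ C > (0 : ℝ), ∀ x y, (∃ α ∈ Set.Icc (0:ℝ) 1, y = α • g1 x + (1 - α) • g2 x ∧
      max (h1 x) (h2 x) = α * h1 x + (1 - α) * h2 x) →
      Real.sqrt (max (h1 x) (h2 x) - max (h1 s) (h2 s)) ≤ C * ‖y‖ := by
  set M := max (h1 s) (h2 s) with hM
  have l1 : h1 s ≤ M := le_max_left _ _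
  have l2 : h2 s ≤ M := le_max_right _ _
  have key : ∀ d, (h1 s < M ∨ ⟪g1 s, d⟫ < 0) → (h2 s < M ∨ ⟪g2 s, d⟫ < 0) → False := by
    intro d k1 k2
    have d1 := KL_desc (h1 s - M) ⟪g1 s, d⟫ (1 / 2 * ⟪d, T1 d⟫) (by linarith)
      (k1.imp (fun h => by linarith) id)
    have d2 := KL_desc (h2 s - M) ⟪g2 s, d⟫ (1 / 2 * ⟪d, T2 d⟫) (by linarith)
      (k2.imp (fun h => by linarith) id)
    obtain ⟨t, ht1, ht2⟩ := (d1.and d2).exists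
    have a1 := e1 s (s + t • d)
    have a2 := e2 s (s + t • d)
    simp only [add_sub_cancel_left, map_smul, inner_smul_left, inner_smul_right,
      RCLike.conj_to_real] at a1 a2
    have := hmin (s + t • d)
    rcases le_max_iff.1 this with h | h <;> nlinarith
  have n1 : ∀ z, h1 z < h1 s → ⟪g1 s, z - s⟫ < 0 := fun z hz => by
    linarith [e1 s z, hp1 (z - s)]
  have n2 : ∀ z, h2 z < h2 s → ⟪g2 s, z - s⟫ < 0 := fun z hz => by
    linarith [e2 s z, hp2 (z - s)]
  obtain ⟨z1, hz1⟩ := hi1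
  obtain ⟨z2, hz2⟩ := hi2
  have E1 : h1 s = M := by
    by_contra hne
    have hlt : h1 s < M := lt_of_le_of_ne l1 hne
    have : h2 s = M := by
      rcases max_choice (h1 s) (h2 s) with h | h
      · exact absurd (hM.trans h).symm hne
      · exact (hM.trans h).symm
    exact key (z2 - s) (Or.inl hlt) (Or.inr (n2 z2 (by linarith)))
  have E2 : h2 s = M := by
    by_contra hne
    exact key (z1 - s) (Or.inr (n1 z1 (by linarith))) (Or.inl (lt_of_le_of_ne l2 hne))
  have p1 : 0 < ‖g1 s‖ := norm_pos_iff.2 fun h => by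
    have := n1 z1 (by linarith)
    simp [h] at this
  have p2 : 0 < ‖g2 s‖ := norm_pos_iff.2 fun h => by
    have := n2 z2 (by linarith)
    simp [h] at this
  set a := ‖g1 s‖ with ha
  set b := ‖g2 s‖ with hb
  have hw : b • g1 s + a • g2 s = 0 := by
    by_contra hw
    have hpos : 0 < ⟪b • g1 s + a • g2 s, b • g1 s + a • g2 s⟫ :=
      real_inner_self_pos.2 hw
    have c : ⟪g2 s, g1 s⟫ = ⟪g1 s, g2 s⟫ := real_inner_comm _ _
    have s1 : ⟪g1 s, g1 s⟫ = a ^ 2 := real_inner_self_eq_norm_sq _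
    have s2 : ⟪g2 s, g2 s⟫ = b ^ 2 := real_inner_self_eq_norm_sq _
    simp only [inner_add_left, inner_add_right, inner_smul_left, inner_smul_right,
      RCLike.conj_to_real, c, s1, s2] at hpos
    have hq : 0 < a * b + ⟪g1 s, g2 s⟫ := by
      by_contra hq
      have : 0 < a * b := mul_pos p1 p2
      nlinarith
    refine key (-(b • g1 s + a • g2 s)) (Or.inr ?_) (Or.inr ?_)
    · simp only [inner_neg_right, inner_add_right, inner_smul_right, s1]
      nlinarith [mul_pos p1 hq]
    · simp only [inner_neg_right, inner_add_right, inner_smul_right, s2, c]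
      nlinarith [mul_pos p2 hq]
  obtain ⟨μ, hμ, hco⟩ := KL_coercive (T1 + T2) hpd
  -- quadratic growth
  have hm : 0 < min a b := lt_min p1 p2
  obtain ⟨ν, hν, hgrow⟩ : ∃ ν > 0, ∀ x, ν * ‖x - s‖ ^ 2 ≤ max (h1 x) (h2 x) - M := by
    refine ⟨min a b * μ / (2 * (a + b)), by positivity, fun x => ?_⟩
    have a1 := e1 s x
    have a2 := e2 s x
    have hz : b * ⟪g1 s, x - s⟫ + a * ⟪g2 s, x - s⟫ = 0 := by
      have : ⟪b • g1 s + a • g2 s, x - s⟫ = 0 := by rw [hw, inner_zero_left]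
      simpa only [inner_add_left, inner_smul_left, RCLike.conj_to_real] using this
    have hcx := hco (x - s)
    simp only [LinearMap.add_apply, inner_add_right] at hcx
    have u1 : min a b * ⟪x - s, T1 (x - s)⟫ ≤ b * ⟪x - s, T1 (x - s)⟫ :=
      mul_le_mul_of_nonneg_right (min_le_right _ _) (hp1 _)
    have u2 : min a b * ⟪x - s, T2 (x - s)⟫ ≤ a * ⟪x - s, T2 (x - s)⟫ :=
      mul_le_mul_of_nonneg_right (min_le_left _ _) (hp2 _)
    have u3 := mul_le_mul_of_nonneg_left hcx hm.le
    have v1 : b * h1 x ≤ b * max (h1 x) (h2 x) :=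
      mul_le_mul_of_nonneg_left (le_max_left _ _) p2.le
    have v2 : a * h2 x ≤ a * max (h1 x) (h2 x) :=
      mul_le_mul_of_nonneg_left (le_max_right _ _) p1.le
    have w1 : b * h1 x = b * (M + ⟪g1 s, x - s⟫ + 1 / 2 * ⟪x - s, T1 (x - s)⟫) := by
      rw [a1, E1]
    have w2 : a * h2 x = a * (M + ⟪g2 s, x - s⟫ + 1 / 2 * ⟪x - s, T2 (x - s)⟫) := by
      rw [a2, E2]
    rw [div_mul_eq_mul_div, div_le_iff₀ (by positivity)]
    nlinarith
  refine ⟨Real.sqrt (1 / ν), Real.sqrt_pos.2 (by positivity), ?_⟩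
  rintro x y ⟨α, ⟨hα0, hα1⟩, hy, hmx⟩
  set D := max (h1 x) (h2 x) - M with hD
  have hg := hgrow x
  have hD0 : 0 ≤ D := le_trans (by positivity) hg
  have hin : D ≤ ‖y‖ * ‖x - s‖ := by
    have a1 := e1 x s
    have a2 := e2 x s
    have hle : D ≤ ⟪y, x - s⟫ := by
      rw [hy, ← neg_sub s x]
      simp only [inner_neg_right, inner_add_left, inner_smul_left, RCLike.conj_to_real]
      nlinarith [mul_nonneg hα0 (hp1 (s - x)), mul_nonneg (sub_nonneg.2 hα1) (hp2 (s - x))]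
    exact hle.trans (real_inner_le_norm _ _)
  have hfin : D ≤ 1 / ν * ‖y‖ ^ 2 := by
    rcases hD0.eq_or_lt with h0 | h0
    · rw [← h0]; positivity
    · have q1 : D ^ 2 ≤ ‖y‖ ^ 2 * ‖x - s‖ ^ 2 := by
        rw [← mul_pow]; gcongr
      have q2 : ν * D ^ 2 ≤ ‖y‖ ^ 2 * D := by
        nlinarith [mul_le_mul_of_nonneg_left hg (sq_nonneg ‖y‖)]
      rw [one_div, inv_mul_eq_div, le_div_iff₀ hν]
      nlinarith
  calc Real.sqrt D ≤ Real.sqrt (1 / ν * ‖y‖ ^ 2) := Real.sqrt_le_sqrt hfin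
    _ = _ := by rw [Real.sqrt_mul (by positivity), Real.sqrt_sq (norm_nonneg _)]

lemma KL_expand {E : Type*} [NormedAddCommGroup E] [InnerProductSpace ℝ E]
    (T : E →ₗ[ℝ] E) (hT : T.IsSymmetric) (a : E) (r : ℝ) (h : E → ℝ) (g : E → E)
    (hh : ∀ x, h x = (1 / 2) * ⟪x, T x⟫ + ⟪a, x⟫ + r) (hg : ∀ x, g x = T x + a) (x z : E) :
    h z = h x + ⟪g x, z - x⟫ + 1 / 2 * ⟪z - x, T (z - x)⟫ := by
  have c1 : ⟪T x, z⟫ = ⟪x, T z⟫ := hT x z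
  have c2 : ⟪z, T x⟫ = ⟪x, T z⟫ := by rw [real_inner_comm, c1]
  have c3 : ⟪T x, x⟫ = ⟪x, T x⟫ := hT x x
  rw [hh, hh, hg]
  simp only [map_sub, inner_sub_left, inner_sub_right, inner_add_left, c1, c2, c3]
  ring

/-- Kurdyka–Łojasiewicz property with exponent 1/2 for `H = max{h1, h2}` at a global
minimizer `x*`, under the assumptions that `A1, A2` are positive semidefinite with
`A1 + A2` positive definite and `min h1 < min H`, `min h2 < min H`. -/
theorem KL_exponent_one_half
    (n : ℕ) (A1 A2 : Matrix (Fin n) (Fin n) ℝ)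
    (hA1s : A1.IsSymm) (hA2s : A2.IsSymm)
    (hA1 : A1.PosSemidef) (hA2 : A2.PosSemidef)
    (hsum : (A1 + A2).PosDef)
    (a1 a2 : EuclideanSpace ℝ (Fin n)) (r1 r2 : ℝ)
    (h1 h2 H : EuclideanSpace ℝ (Fin n) → ℝ)
    (hh1 : ∀ x, h1 x = (1 / 2) * ⟪x, A1.toEuclideanLin x⟫ + ⟪a1, x⟫ + r1)
    (hh2 : ∀ x, h2 x = (1 / 2) * ⟪x, A2.toEuclideanLin x⟫ + ⟪a2, x⟫ + r2)
    (hH : ∀ x, H x = max (h1 x) (h2 x))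
    (grad1 grad2 : EuclideanSpace ℝ (Fin n) → EuclideanSpace ℝ (Fin n))
    (hgrad1 : ∀ x, grad1 x = A1.toEuclideanLin x + a1)
    (hgrad2 : ∀ x, grad2 x = A2.toEuclideanLin x + a2)
    (subdiffH : EuclideanSpace ℝ (Fin n) → Set (EuclideanSpace ℝ (Fin n)))
    (hsub : ∀ x, subdiffH x =
      if h2 x < h1 x then {grad1 x}
      else if h1 x < h2 x then {grad2 x}
      else {g | ∃ α ∈ Set.Icc (0 : ℝ) 1, g = α • grad1 x + (1 - α) • grad2 x})
    (xstar : EuclideanSpace ℝ (Fin n)) (hmin : ∀ y, H xstar ≤ H y)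
    (hinf1 : ∃ x, h1 x < H xstar)
    (hinf2 : ∃ x, h2 x < H xstar) :
    ∃ C > (0 : ℝ), ∃ ε > (0 : ℝ),
      ∀ x : EuclideanSpace ℝ (Fin n), ‖x - xstar‖ ≤ ε →
        ∀ y ∈ subdiffH x, Real.sqrt (H x - H xstar) ≤ C * ‖y‖ := by
  have i1 := (Matrix.isPositive_toEuclideanLin_iff.2 hA1)
  have i2 := (Matrix.isPositive_toEuclideanLin_iff.2 hA2)
  obtain ⟨C, hC, hK⟩ := KL_abs A1.toEuclideanLin A2.toEuclideanLin
    (fun x => i1.inner_nonneg_right x)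
    (fun x => i2.inner_nonneg_right x)
    (fun x hx => by
      have h := hsum.dotProduct_mulVec_pos (x := x.ofLp) (by simpa using hx)
      rw [← map_add, EuclideanSpace.inner_eq_star_dotProduct, dotProduct_comm]
      simpa [Matrix.add_mulVec, dotProduct_add] using h)
    h1 h2 grad1 grad2
    (KL_expand _ i1.isSymmetric a1 r1 h1 grad1 hh1 hgrad1)
    (KL_expand _ i2.isSymmetric a2 r2 h2 grad2 hh2 hgrad2)
    xstar (fun y => by rw [← hH, ← hH]; exact hmin y) (by rw [← hH]; exact hinf1)
    (by rw [← hH]; exact hinf2)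
  refine ⟨C, hC, 1, one_pos, fun x _ y hy => ?_⟩
  rw [hH, hH]
  apply hK
  rw [hsub] at hy
  split_ifs at hy with c1 c2
  · exact ⟨1, by simp, by simpa using hy, by simp [c1.le]⟩
  · exact ⟨0, by simp, by simpa using hy, by simp [c2.le]⟩
  · obtain ⟨α, hα, hy⟩ := hy
    have he : h1 x = h2 x := le_antisymm (not_lt.1 c1) (not_lt.1 c2)
    exact ⟨α, hα, hy, by rw [he, max_self]; ring⟩
end

section
/- Let x ∈ ℝⁿ with h1(x) = h2(x), let α ∈ [0, 1], and set g = α·∇h1(x) + (1−α)·∇h2(x). If ∇h1(x)ᵀg = ∇h2(x)ᵀg, then the point x⁺ = x − (1/L)·g satisfies the sufficient descent property H(x) − H(x⁺) ≥ (1/(2L))‖g‖² = (L/2)‖x − x⁺‖². -/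
open Matrix RealInnerProductSpace

theorem aux_quad_le (n : ℕ) (A : Matrix (Fin n) (Fin n) ℝ) (hA : A.IsHermitian)
    (L : ℝ) (hL : (⨆ i, hA.eigenvalues i) ≤ L) (v : EuclideanSpace ℝ (Fin n)) :
    ⟪v, A.toEuclideanLin v⟫ ≤ L * ‖v‖ ^ 2 := by
  have hsym : (A.toEuclideanLin).IsSymmetric := Matrix.isSymmetric_toEuclideanLin_iff.mpr hA
  have hb : ∀ i, A.toEuclideanLin (hA.eigenvectorBasis i)
      = hA.eigenvalues i • hA.eigenvectorBasis i := by
    intro i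
    ext j
    have := congrFun (hA.mulVec_eigenvectorBasis i) j
    simpa [Matrix.toLpLin_apply] using this
  rw [← hA.eigenvectorBasis.sum_inner_mul_inner v (A.toEuclideanLin v),
    ← real_inner_self_eq_norm_sq, ← hA.eigenvectorBasis.sum_inner_mul_inner v v,
    Finset.mul_sum]
  refine Finset.sum_le_sum fun i _ => ?_
  rw [← hsym, hb, real_inner_smul_left, real_inner_comm v]
  have h1 : hA.eigenvalues i ≤ L :=
    (le_ciSup (Set.finite_range hA.eigenvalues).bddAbove i).trans hL
  nlinarith [mul_le_mul_of_nonneg_right h1 (mul_self_nonneg ⟪v, hA.eigenvectorBasis i⟫)]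

theorem aux_descent (n : ℕ) (A : Matrix (Fin n) (Fin n) ℝ) (hA : A.IsHermitian)
    (L : ℝ) (hL : (⨆ i, hA.eigenvalues i) ≤ L) (hLpos : 0 < L)
    (a x g : EuclideanSpace ℝ (Fin n))
    (hg : ⟪A.toEuclideanLin x + a, g⟫ = ‖g‖ ^ 2) :
    (1 / 2) * ⟪x - (1 / L) • g, A.toEuclideanLin (x - (1 / L) • g)⟫ + ⟪a, x - (1 / L) • g⟫
      ≤ (1 / 2) * ⟪x, A.toEuclideanLin x⟫ + ⟪a, x⟫ - (1 / (2 * L)) * ‖g‖ ^ 2 := by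
  have hsym : (A.toEuclideanLin).IsSymmetric := Matrix.isSymmetric_toEuclideanLin_iff.mpr hA
  have hq := aux_quad_le n A hA L hL g
  have hc : ⟪x, A.toEuclideanLin g⟫ = ⟪A.toEuclideanLin x, g⟫ := (hsym x g).symm
  have hc2 : ⟪g, A.toEuclideanLin x⟫ = ⟪A.toEuclideanLin x, g⟫ := real_inner_comm _ _
  rw [inner_add_left] at hg
  simp only [map_sub, map_smul, inner_sub_left, inner_sub_right, real_inner_smul_left,
    real_inner_smul_right, hc, hc2]
  have ha : ⟪a, g⟫ = ‖g‖ ^ 2 - ⟪A.toEuclideanLin x, g⟫ := by linarith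
  rw [ha]
  have h3 : (1 / L) * ((1 / L) * ⟪g, A.toEuclideanLin g⟫) ≤ (1 / L) * ‖g‖ ^ 2 := by
    refine mul_le_mul_of_nonneg_left ?_ (by positivity)
    rw [one_div, inv_mul_le_iff₀ hLpos]
    exact hq
  have h4 : 1 / (2 * L) = (1 / L) / 2 := by field_simp
  rw [h4]
  linarith

/-- Sufficient descent at a kink point: if `h1(x) = h2(x)`, `g` is a convex
combination of the gradients with `∇h1(x)ᵀg = ∇h2(x)ᵀg`, then the step
`x⁺ = x - (1/L) g` satisfies `H(x) - H(x⁺) ≥ (1/(2L))‖g‖² = (L/2)‖x - x⁺‖²`. -/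
theorem sufficient_descent_kink
    (n : ℕ) [NeZero n] (A1 A2 : Matrix (Fin n) (Fin n) ℝ)
    (hA1s : A1.IsSymm) (hA2s : A2.IsSymm)
    (hA1 : A1.PosSemidef) (hA2 : A2.PosSemidef)
    (a1 a2 : EuclideanSpace ℝ (Fin n)) (r1 r2 : ℝ)
    (h1 h2 H : EuclideanSpace ℝ (Fin n) → ℝ)
    (hh1 : ∀ x, h1 x = (1 / 2) * ⟪x, A1.toEuclideanLin x⟫ + ⟪a1, x⟫ + r1)
    (hh2 : ∀ x, h2 x = (1 / 2) * ⟪x, A2.toEuclideanLin x⟫ + ⟪a2, x⟫ + r2)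
    (hH : ∀ x, H x = max (h1 x) (h2 x))
    (L : ℝ)
    (hL : L = max (⨆ i, hA1.1.eigenvalues i) (⨆ i, hA2.1.eigenvalues i))
    (hLpos : 0 < L)
    (x : EuclideanSpace ℝ (Fin n)) (heq : h1 x = h2 x)
    (g1 g2 : EuclideanSpace ℝ (Fin n))
    (hg1 : g1 = A1.toEuclideanLin x + a1)
    (hg2 : g2 = A2.toEuclideanLin x + a2)
    (α : ℝ) (hα : α ∈ Set.Icc (0 : ℝ) 1)
    (g : EuclideanSpace ℝ (Fin n)) (hg : g = α • g1 + (1 - α) • g2)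
    (horth : ⟪g1, g⟫ = ⟪g2, g⟫)
    (xplus : EuclideanSpace ℝ (Fin n)) (hxplus : xplus = x - (1 / L) • g) :
    (1 / (2 * L)) * ‖g‖ ^ 2 = (L / 2) * ‖x - xplus‖ ^ 2 ∧
    (1 / (2 * L)) * ‖g‖ ^ 2 ≤ H x - H xplus := by
  obtain rfl := hxplus
  have e1 : α * ⟪g1, g⟫ + (1 - α) * ⟪g2, g⟫ = ‖g‖ ^ 2 := by
    rw [← real_inner_smul_left, ← real_inner_smul_left, ← inner_add_left, ← hg,
      real_inner_self_eq_norm_sq]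
  have k2 : ⟪g2, g⟫ = ‖g‖ ^ 2 := by rw [horth] at e1; linarith
  have k1 : ⟪g1, g⟫ = ‖g‖ ^ 2 := horth.trans k2
  constructor
  · rw [sub_sub_cancel, norm_smul, mul_pow, Real.norm_eq_abs, sq_abs]
    field_simp
  · have d1 := aux_descent n A1 hA1.1 L (hL ▸ le_max_left _ _) hLpos a1 x g (hg1 ▸ k1)
    have d2 := aux_descent n A2 hA2.1 L (hL ▸ le_max_right _ _) hLpos a2 x g (hg2 ▸ k2)
    have m1 := hh1 x
    have m2 := hh2 x
    have p1 := hh1 (x - (1 / L) • g)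
    have p2 := hh2 (x - (1 / L) • g)
    rw [hH, hH, ← heq, max_self, le_sub_comm]
    exact max_le (by linarith) (by linarith)
end

section
/- Let x ∈ ℝⁿ with h1(x) = h2(x), and write g1 = ∇h1(x), g2 = ∇h2(x). If g1ᵀg2 ≥ g2ᵀg2 (so that g2 is the gradient with smaller norm and the inner product condition of Theorem 3.1 case (a) holds), then the point x⁺ = x − (1/L)·g2 satisfies H(x) − H(x⁺) ≥ (1/(2L))‖g2‖² = (L/2)‖x − x⁺‖². -/
open Matrix RealInnerProductSpace

theorem quad_symm_aux {n : ℕ} {A : Matrix (Fin n) (Fin n) ℝ} (hA : A.IsHermitian)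
    (u v : EuclideanSpace ℝ (Fin n)) :
    ⟪u, A.toEuclideanLin v⟫ = ⟪A.toEuclideanLin u, v⟫ :=
  ((Matrix.isSymmetric_toEuclideanLin_iff.2 hA) u v).symm

theorem quad_le_aux {n : ℕ} {A : Matrix (Fin n) (Fin n) ℝ} (hA : A.IsHermitian)
    (v : EuclideanSpace ℝ (Fin n)) :
    ⟪v, A.toEuclideanLin v⟫ ≤ (⨆ i, hA.eigenvalues i) * ‖v‖ ^ 2 := by
  have key : ∀ i, ⟪hA.eigenvectorBasis i, A.toEuclideanLin v⟫
      = hA.eigenvalues i * ⟪hA.eigenvectorBasis i, v⟫ := by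
    intro i
    have h : A.toEuclideanLin (hA.eigenvectorBasis i)
        = hA.eigenvalues i • hA.eigenvectorBasis i := by
      ext j
      have := congrFun (hA.mulVec_eigenvectorBasis i) j
      simpa [Matrix.toLpLin_apply] using this
    rw [quad_symm_aux hA, h, real_inner_smul_left]
  rw [← real_inner_self_eq_norm_sq, ← hA.eigenvectorBasis.sum_inner_mul_inner v (A.toEuclideanLin v),
    ← hA.eigenvectorBasis.sum_inner_mul_inner v v, Finset.mul_sum]
  refine Finset.sum_le_sum fun i _ => ?_
  rw [key, real_inner_comm v]
  have h1 : hA.eigenvalues i ≤ ⨆ i, hA.eigenvalues i :=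
    le_ciSup (Set.finite_range _).bddAbove i
  nlinarith [mul_self_nonneg (⟪hA.eigenvectorBasis i, v⟫ : ℝ)]

theorem descent_aux {n : ℕ} {A : Matrix (Fin n) (Fin n) ℝ} (hA : A.IsHermitian)
    (a x g : EuclideanSpace ℝ (Fin n)) (r L : ℝ) (hL : 0 < L)
    (hle : (⨆ i, hA.eigenvalues i) ≤ L)
    (hip : ⟪g, g⟫ ≤ ⟪A.toEuclideanLin x + a, g⟫) :
    (1 / 2) * ⟪x - (1 / L) • g, A.toEuclideanLin (x - (1 / L) • g)⟫ + ⟪a, x - (1 / L) • g⟫ + r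
      ≤ (1 / 2) * ⟪x, A.toEuclideanLin x⟫ + ⟪a, x⟫ + r - (1 / (2 * L)) * ‖g‖ ^ 2 := by
  have hq : ⟪g, A.toEuclideanLin g⟫ ≤ L * ‖g‖ ^ 2 :=
    (quad_le_aux hA g).trans (by gcongr)
  have h1 : ⟪x, A.toEuclideanLin g⟫ = ⟪A.toEuclideanLin x, g⟫ := quad_symm_aux hA x g
  have h2 : ⟪g, A.toEuclideanLin x⟫ = ⟪A.toEuclideanLin x, g⟫ := real_inner_comm _ _
  rw [inner_add_left, real_inner_self_eq_norm_sq] at hip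
  simp only [map_sub, map_smul, inner_sub_left, inner_sub_right, real_inner_smul_left,
    real_inner_smul_right, h1, h2]
  generalize (⟪g, A.toEuclideanLin g⟫ : ℝ) = q at *
  generalize (⟪A.toEuclideanLin x, g⟫ : ℝ) = p at *
  have ht : 0 < 1 / L := by positivity
  have e1 : 1 / (2 * L) = (1 / L) / 2 := by field_simp
  have e2 : (1 / L) * L = 1 := by field_simp
  rw [e1]
  generalize 1 / L = t at *
  have k1 := mul_le_mul_of_nonneg_left hip ht.le
  have k2 := mul_le_mul_of_nonneg_left hq (mul_pos ht ht).le
  have k3 : t * t * (L * ‖g‖ ^ 2) = t * ‖g‖ ^ 2 := by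
    linear_combination t * ‖g‖ ^ 2 * e2
  nlinarith

/-- Sufficient descent at a kink point in the case `g1ᵀg2 ≥ g2ᵀg2`: the step
`x⁺ = x - (1/L) g2` satisfies `H(x) - H(x⁺) ≥ (1/(2L))‖g2‖² = (L/2)‖x - x⁺‖²`. -/
theorem sufficient_descent_kink_smaller_gradient
    (n : ℕ) [NeZero n] (A1 A2 : Matrix (Fin n) (Fin n) ℝ)
    (hA1s : A1.IsSymm) (hA2s : A2.IsSymm)
    (hA1 : A1.PosSemidef) (hA2 : A2.PosSemidef)
    (a1 a2 : EuclideanSpace ℝ (Fin n)) (r1 r2 : ℝ)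
    (h1 h2 H : EuclideanSpace ℝ (Fin n) → ℝ)
    (hh1 : ∀ x, h1 x = (1 / 2) * ⟪x, A1.toEuclideanLin x⟫ + ⟪a1, x⟫ + r1)
    (hh2 : ∀ x, h2 x = (1 / 2) * ⟪x, A2.toEuclideanLin x⟫ + ⟪a2, x⟫ + r2)
    (hH : ∀ x, H x = max (h1 x) (h2 x))
    (L : ℝ)
    (hL : L = max (⨆ i, hA1.1.eigenvalues i) (⨆ i, hA2.1.eigenvalues i))
    (hLpos : 0 < L)
    (x : EuclideanSpace ℝ (Fin n)) (heq : h1 x = h2 x)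
    (g1 g2 : EuclideanSpace ℝ (Fin n))
    (hg1 : g1 = A1.toEuclideanLin x + a1)
    (hg2 : g2 = A2.toEuclideanLin x + a2)
    (hip : ⟪g2, g2⟫ ≤ ⟪g1, g2⟫)
    (xplus : EuclideanSpace ℝ (Fin n)) (hxplus : xplus = x - (1 / L) • g2) :
    (1 / (2 * L)) * ‖g2‖ ^ 2 = (L / 2) * ‖x - xplus‖ ^ 2 ∧
    (1 / (2 * L)) * ‖g2‖ ^ 2 ≤ H x - H xplus := by
  constructor
  · rw [hxplus, sub_sub_cancel, norm_smul, mul_pow, Real.norm_eq_abs, sq_abs]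
    field_simp
  · have d1 := descent_aux hA1.1 a1 x g2 r1 L hLpos (hL ▸ le_max_left _ _) (hg1 ▸ hip)
    have d2 := descent_aux hA2.1 a2 x g2 r2 L hLpos (hL ▸ le_max_right _ _) (hg2 ▸ le_refl _)
    rw [← hxplus, ← hh1, ← hh1] at d1
    rw [← hxplus, ← hh2, ← hh2] at d2
    rw [hH, hH, heq, max_self]
    have : max (h1 xplus) (h2 xplus) ≤ h2 x - (1 / (2 * L)) * ‖g2‖ ^ 2 :=
      max_le (heq ▸ d1) d2
    linarith
end

section
/- Let H : ℝⁿ → ℝ be a function with global minimizer x* (H(x*) ≤ H(y) for all y), and let L > 0, C > 0. Suppose x ∈ ℝⁿ, d ∈ ℝⁿ, and x⁺ = x − (1/L)·d satisfy the sufficient descent property H(x) − H(x⁺) ≥ (L/2)‖x − x⁺‖² and the KL inequality (H(x) − H(x*))^{1/2} ≤ C·‖d‖. Then H(x⁺) − H(x*) ≤ (1 − 1/(2C²L))·(H(x) − H(x*)); in particular, iterating such steps yields linear convergence of the function values at rate (1 − 1/(2C²L)) per step. -/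
/-- One step of linear convergence: if the step `x⁺ = x - (1/L) d` satisfies the
sufficient descent property `H(x) - H(x⁺) ≥ (L/2)‖x - x⁺‖²` and the KL inequality
`(H(x) - H(x*))^{1/2} ≤ C ‖d‖` at a global minimizer `x*` of `H`, then
`H(x⁺) - H(x*) ≤ (1 - 1/(2C²L)) (H(x) - H(x*))`. -/
theorem linear_convergence_step
    (n : ℕ) (H : EuclideanSpace ℝ (Fin n) → ℝ)
    (xstar : EuclideanSpace ℝ (Fin n)) (hmin : ∀ y, H xstar ≤ H y)
    (L C : ℝ) (hL : 0 < L) (hC : 0 < C)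
    (x d xplus : EuclideanSpace ℝ (Fin n))
    (hxplus : xplus = x - (1 / L) • d)
    (hdescent : (L / 2) * ‖x - xplus‖ ^ 2 ≤ H x - H xplus)
    (hKL : Real.sqrt (H x - H xstar) ≤ C * ‖d‖) :
    H xplus - H xstar ≤ (1 - 1 / (2 * C ^ 2 * L)) * (H x - H xstar) := by
  have hn : ‖x - xplus‖ = ‖d‖ / L := by
    rw [hxplus, sub_sub_cancel, norm_smul, Real.norm_of_nonneg (by positivity)]
    ring
  have h1 : H x - H xstar ≤ (C * ‖d‖) ^ 2 := (Real.sqrt_le_left (by positivity)).mp hKL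
  have h2 : 1 / (2 * C ^ 2 * L) * (H x - H xstar) ≤ (L / 2) * ‖x - xplus‖ ^ 2 := by
    calc 1 / (2 * C ^ 2 * L) * (H x - H xstar)
        ≤ 1 / (2 * C ^ 2 * L) * (C * ‖d‖) ^ 2 := by gcongr
      _ = (L / 2) * ‖x - xplus‖ ^ 2 := by
        rw [hn]
        field_simp
  linarith
end

section
/- For ρ > 0 define ∂H_ρ(x) = {∇h1(x)} if h1(x) − h2(x) > ρ, ∂H_ρ(x) = {∇h2(x)} if h2(x) − h1(x) > ρ, and ∂H_ρ(x) = {α∇h1(x) + (1−α)∇h2(x) : α ∈ [0, 1]} if |h1(x) − h2(x)| ≤ ρ; a point x is a (ρ, δ)-critical point of H if there exists g ∈ ∂H_ρ(x) with ‖g‖ < δ. Suppose (ρ^t, δ^t) are positive pairs with (ρ^t, δ^t) → (0, 0) as t → ∞, {x_k} is a sequence in ℝⁿ, and for each t ≥ 1 there exists a positive integer K(t) such that x_k is a (ρ^t, δ^t)-critical point of H for all k ≥ K(t). Then every accumulation point x̄ of {x_k} is a critical point of H, i.e., 0 ∈ ∂H(x̄). -/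
open Matrix RealInnerProductSpace

/-- If `x_k` is eventually a `(ρ^t, δ^t)`-critical point of `H = max{h1, h2}` for each
`t`, where `(ρ^t, δ^t) → (0, 0)`, then every accumulation point of `{x_k}` is a
critical point of `H`, i.e. `0 ∈ ∂H(x̄)`. -/
theorem accumulation_point_critical
    (n : ℕ) (A1 A2 : Matrix (Fin n) (Fin n) ℝ)
    (hA1s : A1.IsSymm) (hA2s : A2.IsSymm)
    (hA1 : A1.PosSemidef) (hA2 : A2.PosSemidef)
    (a1 a2 : EuclideanSpace ℝ (Fin n)) (r1 r2 : ℝ)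
    (h1 h2 H : EuclideanSpace ℝ (Fin n) → ℝ)
    (hh1 : ∀ x, h1 x = (1 / 2) * ⟪x, A1.toEuclideanLin x⟫ + ⟪a1, x⟫ + r1)
    (hh2 : ∀ x, h2 x = (1 / 2) * ⟪x, A2.toEuclideanLin x⟫ + ⟪a2, x⟫ + r2)
    (hH : ∀ x, H x = max (h1 x) (h2 x))
    (grad1 grad2 : EuclideanSpace ℝ (Fin n) → EuclideanSpace ℝ (Fin n))
    (hgrad1 : ∀ x, grad1 x = A1.toEuclideanLin x + a1)
    (hgrad2 : ∀ x, grad2 x = A2.toEuclideanLin x + a2)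
    (subdiffH : EuclideanSpace ℝ (Fin n) → Set (EuclideanSpace ℝ (Fin n)))
    (hsub : ∀ x, subdiffH x =
      if h2 x < h1 x then {grad1 x}
      else if h1 x < h2 x then {grad2 x}
      else {g | ∃ α ∈ Set.Icc (0 : ℝ) 1, g = α • grad1 x + (1 - α) • grad2 x})
    (subdiffHρ : ℝ → EuclideanSpace ℝ (Fin n) → Set (EuclideanSpace ℝ (Fin n)))
    (hsubρ : ∀ ρ x, subdiffHρ ρ x =
      if h2 x + ρ < h1 x then {grad1 x}
      else if h1 x + ρ < h2 x then {grad2 x}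
      else {g | ∃ α ∈ Set.Icc (0 : ℝ) 1, g = α • grad1 x + (1 - α) • grad2 x})
    (ρ δ : ℕ → ℝ) (hρpos : ∀ t, 0 < ρ t) (hδpos : ∀ t, 0 < δ t)
    (hρ0 : Filter.Tendsto ρ Filter.atTop (nhds 0))
    (hδ0 : Filter.Tendsto δ Filter.atTop (nhds 0))
    (x : ℕ → EuclideanSpace ℝ (Fin n))
    (K : ℕ → ℕ)
    (hcrit : ∀ t : ℕ, 1 ≤ t → ∀ k : ℕ, K t ≤ k →
      ∃ g ∈ subdiffHρ (ρ t) (x k), ‖g‖ < δ t) :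
    ∀ xbar : EuclideanSpace ℝ (Fin n),
      (∃ φ : ℕ → ℕ, StrictMono φ ∧
        Filter.Tendsto (x ∘ φ) Filter.atTop (nhds xbar)) →
      0 ∈ subdiffH xbar := by
  rintro xbar ⟨φ, hφ, hx⟩
  have c1 : Continuous grad1 := by
    have : grad1 = fun x => A1.toEuclideanLin x + a1 := funext hgrad1
    rw [this]
    exact (LinearMap.continuous_of_finiteDimensional _).add continuous_const
  have c2 : Continuous grad2 := by
    have : grad2 = fun x => A2.toEuclideanLin x + a2 := funext hgrad2
    rw [this]
    exact (LinearMap.continuous_of_finiteDimensional _).add continuous_const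
  have d1 : Continuous h1 := by
    have : h1 = fun x => (1 / 2) * ⟪x, A1.toEuclideanLin x⟫ + ⟪a1, x⟫ + r1 := funext hh1
    rw [this]
    have := LinearMap.continuous_of_finiteDimensional (A1.toEuclideanLin)
    exact ((continuous_const.mul (continuous_id.inner this)).add
      (continuous_const.inner continuous_id)).add continuous_const
  have d2 : Continuous h2 := by
    have : h2 = fun x => (1 / 2) * ⟪x, A2.toEuclideanLin x⟫ + ⟪a2, x⟫ + r2 := funext hh2
    rw [this]
    have := LinearMap.continuous_of_finiteDimensional (A2.toEuclideanLin)
    exact ((continuous_const.mul (continuous_id.inner this)).add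
      (continuous_const.inner continuous_id)).add continuous_const
  obtain ⟨y, hy⟩ : ∃ y : ℕ → EuclideanSpace ℝ (Fin n),
      y = fun m => x (φ (K (m + 1) + m)) := ⟨_, rfl⟩
  have hyt : Filter.Tendsto y Filter.atTop (nhds xbar) := by
    rw [hy]
    exact hx.comp (Filter.tendsto_atTop_mono (fun m => Nat.le_add_left m (K (m + 1)))
      Filter.tendsto_id)
  have hex : ∀ m, ∃ g ∈ subdiffHρ (ρ (m + 1)) (y m), ‖g‖ < δ (m + 1) := by
    intro m
    rw [hy]
    exact hcrit (m + 1) (by omega) _ ((Nat.le_add_right _ _).trans (hφ.id_le _))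
  choose g hg hgn using hex
  have hg0 : Filter.Tendsto g Filter.atTop (nhds 0) :=
    squeeze_zero_norm (fun m => (hgn m).le) (hδ0.comp (Filter.tendsto_add_atTop_nat 1))
  have hρ1 : Filter.Tendsto (fun m => ρ (m + 1)) Filter.atTop (nhds 0) :=
    hρ0.comp (Filter.tendsto_add_atTop_nat 1)
  have e1 := (d1.tendsto xbar).comp hyt
  have e2 := (d2.tendsto xbar).comp hyt
  have f1 := (c1.tendsto xbar).comp hyt
  have f2 := (c2.tendsto xbar).comp hyt
  rw [hsub]
  split_ifs with p q
  · have ev := (e2.add hρ1).eventually_lt e1 (by simpa using p)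
    have : g =ᶠ[Filter.atTop] (grad1 ∘ y) := by
      filter_upwards [ev] with m hm
      have h := hg m
      simp only [Function.comp_apply] at hm
      rw [hsubρ, if_pos hm] at h
      exact h
    exact tendsto_nhds_unique hg0 (f1.congr' this.symm)
  · have ev := (e1.add hρ1).eventually_lt e2 (by simpa using q)
    have : g =ᶠ[Filter.atTop] (grad2 ∘ y) := by
      filter_upwards [ev] with m hm
      have h := hg m
      have hp := hρpos (m + 1)
      simp only [Function.comp_apply] at hm
      rw [hsubρ, if_neg (by linarith), if_pos hm] at h
      exact h
    exact tendsto_nhds_unique hg0 (f2.congr' this.symm)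
  · have hα : ∀ m, ∃ α ∈ Set.Icc (0 : ℝ) 1,
        g m = α • grad1 (y m) + (1 - α) • grad2 (y m) := by
      intro m
      have h := hg m
      rw [hsubρ] at h
      split_ifs at h
      · exact ⟨1, by simp, by simpa using h⟩
      · exact ⟨0, by simp, by simpa using h⟩
      · exact h
    choose α hαm hαg using hα
    obtain ⟨a, ha, ψ, hψ, hlim⟩ := isCompact_Icc.tendsto_subseq hαm
    refine ⟨a, ha, ?_⟩
    have l1 := (hlim.smul (f1.comp hψ.tendsto_atTop)).add
      ((hlim.const_sub 1).smul (f2.comp hψ.tendsto_atTop))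
    refine tendsto_nhds_unique (hg0.comp hψ.tendsto_atTop) (l1.congr fun m => ?_)
    simp [hαg]
end

section
/- Let ρ > 0 and G > 0, and let x ∈ ℝⁿ be a point with h1(x) − h2(x) > ρ, ‖∇h1(x)‖ ≤ G, and ‖∇h2(x)‖ ≤ G. Then for every step size β with 0 < β ≤ min{1/L, ρ/(2G²)}, the point x⁺ = x − β·∇h1(x) satisfies H(x⁺) ≤ H(x) − (β/2)‖∇h1(x)‖². -/
open Matrix RealInnerProductSpace

/-- Rayleigh bound. -/
lemma rayleigh_bound {n : ℕ} {A : Matrix (Fin n) (Fin n) ℝ} (hA : A.IsHermitian)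
    (L : ℝ) (hL : ∀ i, hA.eigenvalues i ≤ L) (v : EuclideanSpace ℝ (Fin n)) :
    ⟪v, A.toEuclideanLin v⟫ ≤ L * ‖v‖ ^ 2 := by
  have hs : A.toEuclideanLin.IsSymmetric := Matrix.isSymmetric_toEuclideanLin_iff.mpr hA
  have he : ∀ i, A.toEuclideanLin (hA.eigenvectorBasis i)
      = hA.eigenvalues i • hA.eigenvectorBasis i := by
    intro i
    have := hA.mulVec_eigenvectorBasis i
    ext j
    simpa [Matrix.toLpLin_apply] using congrFun this j
  rw [← hA.eigenvectorBasis.sum_inner_mul_inner v (A.toEuclideanLin v),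
    ← real_inner_self_eq_norm_sq, ← hA.eigenvectorBasis.sum_inner_mul_inner v v, Finset.mul_sum]
  refine Finset.sum_le_sum fun i _ => ?_
  rw [← hs, he, real_inner_smul_left, real_inner_comm v]
  nlinarith [mul_le_mul_of_nonneg_right (hL i) (mul_self_nonneg ⟪v, hA.eigenvectorBasis i⟫),
    real_inner_comm v (hA.eigenvectorBasis i)]

/-- Quadratic upper bound along a step. -/
lemma quad_step {n : ℕ} {A : Matrix (Fin n) (Fin n) ℝ} (hA : A.IsHermitian)
    (L : ℝ) (hL : ∀ i, hA.eigenvalues i ≤ L) (a x g : EuclideanSpace ℝ (Fin n)) (r β : ℝ)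
    (h : EuclideanSpace ℝ (Fin n) → ℝ)
    (hh : ∀ x, h x = (1 / 2) * ⟪x, A.toEuclideanLin x⟫ + ⟪a, x⟫ + r) :
    h (x - β • g) ≤ h x - β * ⟪A.toEuclideanLin x + a, g⟫ + β ^ 2 / 2 * (L * ‖g‖ ^ 2) := by
  have hs : A.toEuclideanLin.IsSymmetric := Matrix.isSymmetric_toEuclideanLin_iff.mpr hA
  have hb := mul_le_mul_of_nonneg_left (rayleigh_bound hA L hL g) (by positivity : 0 ≤ β ^ 2 / 2)
  have h1 : ⟪x, A.toEuclideanLin g⟫ = ⟪A.toEuclideanLin x, g⟫ := (hs x g).symm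
  have h2 : ⟪g, A.toEuclideanLin x⟫ = ⟪A.toEuclideanLin x, g⟫ := real_inner_comm _ _
  rw [hh, hh]
  simp only [map_sub, map_smul, inner_sub_left, inner_sub_right, inner_add_left,
    real_inner_smul_left, real_inner_smul_right, h1, h2]
  linarith

/-- Descent of `H = max{h1, h2}` along `-∇h1(x)` at a point where `h1(x) - h2(x) > ρ`
and both gradients are bounded by `G`: for every step size
`0 < β ≤ min{1/L, ρ/(2G²)}`, the point `x⁺ = x - β ∇h1(x)` satisfies
`H(x⁺) ≤ H(x) - (β/2)‖∇h1(x)‖²`. -/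
theorem descent_smooth_region
    (n : ℕ) [NeZero n] (A1 A2 : Matrix (Fin n) (Fin n) ℝ)
    (hA1s : A1.IsSymm) (hA2s : A2.IsSymm)
    (hA1 : A1.PosSemidef) (hA2 : A2.PosSemidef)
    (a1 a2 : EuclideanSpace ℝ (Fin n)) (r1 r2 : ℝ)
    (h1 h2 H : EuclideanSpace ℝ (Fin n) → ℝ)
    (hh1 : ∀ x, h1 x = (1 / 2) * ⟪x, A1.toEuclideanLin x⟫ + ⟪a1, x⟫ + r1)
    (hh2 : ∀ x, h2 x = (1 / 2) * ⟪x, A2.toEuclideanLin x⟫ + ⟪a2, x⟫ + r2)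
    (hH : ∀ x, H x = max (h1 x) (h2 x))
    (L : ℝ)
    (hL : L = max (⨆ i, hA1.1.eigenvalues i) (⨆ i, hA2.1.eigenvalues i))
    (hLpos : 0 < L)
    (ρ G : ℝ) (hρ : 0 < ρ) (hG : 0 < G)
    (x : EuclideanSpace ℝ (Fin n))
    (g1 g2 : EuclideanSpace ℝ (Fin n))
    (hg1 : g1 = A1.toEuclideanLin x + a1)
    (hg2 : g2 = A2.toEuclideanLin x + a2)
    (hgap : h2 x + ρ < h1 x)
    (hG1 : ‖g1‖ ≤ G) (hG2 : ‖g2‖ ≤ G) :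
    ∀ β : ℝ, 0 < β → β ≤ min (1 / L) (ρ / (2 * G ^ 2)) →
      H (x - β • g1) ≤ H x - (β / 2) * ‖g1‖ ^ 2 := by
  intro β hβ hle
  have e1 : ∀ i, hA1.1.eigenvalues i ≤ L := fun i => hL ▸
    (le_ciSup (Set.finite_range _).bddAbove i).trans (le_max_left _ _)
  have e2 : ∀ i, hA2.1.eigenvalues i ≤ L := fun i => hL ▸
    (le_ciSup (Set.finite_range _).bddAbove i).trans (le_max_right _ _)
  have b1 : β * L ≤ 1 := (le_div_iff₀ hLpos).mp (hle.trans (min_le_left _ _))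
  have b2 : β * (2 * G ^ 2) ≤ ρ :=
    (le_div_iff₀ (by positivity)).mp (hle.trans (min_le_right _ _))
  have s1 := quad_step hA1.1 L e1 a1 x g1 r1 β h1 hh1
  have s2 := quad_step hA2.1 L e2 a2 x g1 r2 β h2 hh2
  rw [← hg1, real_inner_self_eq_norm_sq] at s1
  rw [← hg2] at s2
  have q : β ^ 2 / 2 * (L * ‖g1‖ ^ 2) ≤ β / 2 * ‖g1‖ ^ 2 := by
    have := mul_le_mul_of_nonneg_right b1 (by positivity : 0 ≤ β / 2 * ‖g1‖ ^ 2)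
    linarith
  have c : -⟪g2, g1⟫ ≤ G ^ 2 := by
    have c1 := neg_le_of_abs_le (abs_real_inner_le_norm g2 g1)
    have c2 := mul_le_mul hG2 hG1 (norm_nonneg _) hG.le
    linarith
  have d : ‖g1‖ ^ 2 ≤ G ^ 2 := pow_le_pow_left₀ (norm_nonneg _) hG1 2
  have c' := mul_le_mul_of_nonneg_left c hβ.le
  have d' := mul_le_mul_of_nonneg_left d hβ.le
  rw [hH, hH, max_eq_left (by linarith : h2 x ≤ h1 x)]
  apply max_le <;> linarith
end

section
/- Let A be an n×n symmetric positive definite matrix, B an n×n symmetric matrix, a ∈ ℝⁿ, and c1 ≤ c2 real numbers. Let x0 = A⁻¹a be the unconstrained minimizer of xᵀAx − 2aᵀx. If x0ᵀB x0 < c1, then problem (IP) is equivalent to problem (IP1): inf{xᵀAx − 2aᵀx : c1 ≤ xᵀBx ≤ c2} = inf{xᵀAx − 2aᵀx : c1 ≤ xᵀBx}. -/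
open Matrix

/-- If the unconstrained minimizer `x0 = A⁻¹ a` of `xᵀAx - 2aᵀx` satisfies
`x0ᵀ B x0 < c1`, then the interval-constrained problem (IP) is equivalent to the
one-sided problem (IP1). -/
theorem interval_problem_reduction
    (n : ℕ) (A B : Matrix (Fin n) (Fin n) ℝ)
    (hAs : A.IsSymm) (hA : A.PosDef) (hBs : B.IsSymm)
    (a : Fin n → ℝ) (c1 c2 : ℝ) (hc : c1 ≤ c2)
    (f : (Fin n → ℝ) → ℝ)
    (hf : ∀ x, f x = x ⬝ᵥ A.mulVec x - 2 * (a ⬝ᵥ x))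
    (x0 : Fin n → ℝ) (hx0 : x0 = A⁻¹.mulVec a)
    (hlt : x0 ⬝ᵥ B.mulVec x0 < c1) :
    sInf (f '' {x | c1 ≤ x ⬝ᵥ B.mulVec x ∧ x ⬝ᵥ B.mulVec x ≤ c2}) =
    sInf (f '' {x | c1 ≤ x ⬝ᵥ B.mulVec x}) := by
  have hAx : A.mulVec x0 = a := by
    have hu : IsUnit A.det := (Matrix.isUnit_iff_isUnit_det A).1 hA.isUnit
    rw [hx0, Matrix.mulVec_mulVec, Matrix.mul_nonsing_inv _ hu, Matrix.one_mulVec]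
  have hpos : ∀ d : Fin n → ℝ, 0 ≤ d ⬝ᵥ A.mulVec d := by
    intro d
    simpa using hA.posSemidef.dotProduct_mulVec_nonneg d
  have hexp : ∀ (t : ℝ) (d : Fin n → ℝ),
      f (x0 + t • d) = f x0 + t ^ 2 * (d ⬝ᵥ A.mulVec d) := by
    intro t d
    have h1 : x0 ⬝ᵥ A.mulVec d = a ⬝ᵥ d := by
      rw [Matrix.dotProduct_mulVec, ← Matrix.mulVec_transpose, hAs.eq, hAx]
    have h2 : d ⬝ᵥ a = a ⬝ᵥ d := dotProduct_comm _ _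
    simp only [hf, Matrix.mulVec_add, Matrix.mulVec_smul, dotProduct_add, add_dotProduct,
      dotProduct_smul, smul_dotProduct, smul_eq_mul, hAx, h1, h2]
    ring
  have hmin : ∀ x, f x0 ≤ f x := by
    intro x
    have h := hexp 1 (x - x0)
    have h' := hpos (x - x0)
    simp only [one_smul, add_sub_cancel] at h
    linarith
  have key : ∀ x, c1 ≤ x ⬝ᵥ B.mulVec x → ∃ y, y ⬝ᵥ B.mulVec y = c1 ∧ f y ≤ f x := by
    intro x hx
    let g : ℝ → ℝ := fun t => (x0 + t • (x - x0)) ⬝ᵥ B.mulVec (x0 + t • (x - x0))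
    have hg : Continuous g := by
      simp only [g, Matrix.mulVec_add, Matrix.mulVec_smul, dotProduct_add, add_dotProduct,
        dotProduct_smul, smul_dotProduct, smul_eq_mul]
      fun_prop
    have h0 : g 0 ≤ c1 := by simpa [g] using hlt.le
    have h1 : c1 ≤ g 1 := by simpa [g] using hx
    obtain ⟨t, ⟨ht0, ht1⟩, ht⟩ := intermediate_value_Icc zero_le_one hg.continuousOn ⟨h0, h1⟩
    refine ⟨x0 + t • (x - x0), ht, ?_⟩
    have h := hexp 1 (x - x0)
    have h' := hpos (x - x0)
    simp only [one_smul, add_sub_cancel] at h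
    rw [hexp, h]
    have : t ^ 2 ≤ 1 ^ 2 := by gcongr
    nlinarith
  have hbdd : BddBelow (f '' {x | c1 ≤ x ⬝ᵥ B.mulVec x}) := by
    refine ⟨f x0, ?_⟩
    rintro _ ⟨x, -, rfl⟩
    exact hmin x
  have hsub : f '' {x | c1 ≤ x ⬝ᵥ B.mulVec x ∧ x ⬝ᵥ B.mulVec x ≤ c2} ⊆
      f '' {x | c1 ≤ x ⬝ᵥ B.mulVec x} := Set.image_mono fun x hx => hx.1
  rcases Set.eq_empty_or_nonempty {x | c1 ≤ x ⬝ᵥ B.mulVec x} with he | hne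
  · rw [he, Set.image_empty] at hsub
    rw [he, Set.image_empty, Set.subset_empty_iff.1 hsub]
  · apply le_antisymm
    · refine le_csInf (hne.image f) ?_
      rintro _ ⟨x, hx, rfl⟩
      obtain ⟨y, hy, hyx⟩ := key x hx
      exact csInf_le_of_le (hbdd.mono hsub) ⟨y, ⟨hy.ge, hy.le.trans hc⟩, rfl⟩ hyx
    · obtain ⟨x, hx⟩ := hne
      obtain ⟨y, hy, -⟩ := key x hx
      exact csInf_le_csInf hbdd ⟨f y, y, ⟨hy.ge, hy.le.trans hc⟩, rfl⟩ hsub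
end
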